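/- arXiv:2510.24119 — 3 statements merged into one kernel-verified Lean document; each statement's English description precedes it below -/
import Mathlib

section
/- Lipschitz estimate for Feynman–Kac semigroups: Assume hypotheses (I) and (C), and let V : X → ℝ be Lipschitz continuous. Then there exists a constant C_V < ∞ such that for every Lipschitz continuous f : X → ℝ, every n ∈ ℕ and all x, x' ∈ X, |Q_n^V f(x) − Q_n^V f(x')| ≤ C_V·‖f‖_L·‖Q_n^V 1‖_∞·d(x,x'), where ‖f‖_L = ‖f‖_∞ + Lip(f). -/
open MeasureTheory Filter Topology
open scoped ENNReal NNReal

noncomputable def kIter {X : Type*} [MeasurableSpace X] (κ : X → Measure X) : ℕ → X → Measure X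
  | 0 => fun x => Measure.dirac x
  | n + 1 => fun x => (kIter κ n x).bind κ

noncomputable def FK {X : Type*} [MeasurableSpace X] (κ : X → Measure X) (V f : X → ℝ) (x : X) : ℝ :=
  ∫ y, Real.exp (V y) * f y ∂(κ x)

noncomputable def FKiter {X : Type*} [MeasurableSpace X] (κ : X → Measure X) (V : X → ℝ) :
    ℕ → (X → ℝ) → X → ℝ
  | 0 => fun f => f
  | n + 1 => fun f => FK κ V (FKiter κ V n f)

noncomputable def supNorm {X : Type*} (f : X → ℝ) : ℝ := ⨆ x, |f x|

noncomputable def lipConst {X : Type*} [MetricSpace X] (f : X → ℝ) : ℝ :=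
  sSup {c | ∃ x y, x ≠ y ∧ c = |f x - f y| / dist x y}

noncomputable def lipNorm {X : Type*} [MetricSpace X] (f : X → ℝ) : ℝ := supNorm f + lipConst f

lemma fk_int {X : Type*} [MetricSpace X] [CompactSpace X] [MeasurableSpace X] [BorelSpace X]
    {f : X → ℝ} (hf : Continuous f) (μ : Measure X) [IsFiniteMeasure μ] : Integrable f μ :=
  hf.integrable_of_hasCompactSupport (HasCompactSupport.of_compactSpace f)

lemma FK_cont {X : Type*} [MetricSpace X] [CompactSpace X] [MeasurableSpace X] [BorelSpace X]
    {κ : X → Measure X}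
    (hF : ∀ f : X → ℝ, Continuous f → Continuous fun x => ∫ y, f y ∂(κ x))
    {V f : X → ℝ} (hV : Continuous V) (hf : Continuous f) : Continuous (FK κ V f) :=
  hF _ (by fun_prop)

lemma FKiter_cont {X : Type*} [MetricSpace X] [CompactSpace X] [MeasurableSpace X] [BorelSpace X]
    {κ : X → Measure X}
    (hF : ∀ f : X → ℝ, Continuous f → Continuous fun x => ∫ y, f y ∂(κ x))
    {V f : X → ℝ} (hV : Continuous V) (hf : Continuous f) (n : ℕ) :
    Continuous (FKiter κ V n f) := by
  induction n with
  | zero => exact hf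
  | succ n ih => exact FK_cont hF hV ih

lemma FK_mono {X : Type*} [MetricSpace X] [CompactSpace X] [MeasurableSpace X] [BorelSpace X]
    {κ : X → Measure X} (hp : ∀ x, IsProbabilityMeasure (κ x))
    {V f g : X → ℝ} (hV : Continuous V) (hf : Continuous f) (hg : Continuous g)
    (h : ∀ x, f x ≤ g x) (x : X) : FK κ V f x ≤ FK κ V g x := by
  have := hp x
  unfold FK
  exact integral_mono (fk_int (by fun_prop) _) (fk_int (by fun_prop) _)
    (fun y => mul_le_mul_of_nonneg_left (h y) (Real.exp_pos _).le)

lemma FK_mul {X : Type*} [MeasurableSpace X]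
    (κ : X → Measure X) (V f : X → ℝ) (a : ℝ) (x : X) :
    FK κ V (fun y => a * f y) x = a * FK κ V f x := by
  unfold FK
  rw [← integral_const_mul]
  congr 1; ext y; ring

lemma FK_add {X : Type*} [MetricSpace X] [CompactSpace X] [MeasurableSpace X] [BorelSpace X]
    {κ : X → Measure X} (hp : ∀ x, IsProbabilityMeasure (κ x))
    {V f g : X → ℝ} (hV : Continuous V) (hf : Continuous f) (hg : Continuous g) (x : X) :
    FK κ V (fun y => f y + g y) x = FK κ V f x + FK κ V g x := by
  have := hp x
  unfold FK
  rw [← integral_add (fk_int (by fun_prop) _) (fk_int (by fun_prop) _)]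
  congr 1; ext y; ring

lemma FK_sum {X : Type*} [MetricSpace X] [CompactSpace X] [MeasurableSpace X] [BorelSpace X]
    {κ : X → Measure X} (hp : ∀ x, IsProbabilityMeasure (κ x))
    {V : X → ℝ} (hV : Continuous V) (f : ℕ → X → ℝ) (hf : ∀ k, Continuous (f k)) (n : ℕ) (x : X) :
    FK κ V (fun y => ∑ k ∈ Finset.range n, f k y) x = ∑ k ∈ Finset.range n, FK κ V (f k) x := by
  induction n with
  | zero => simp [FK]
  | succ n ih =>
    simp only [Finset.sum_range_succ]
    rw [FK_add hp hV (continuous_finsetSum _ (fun k _ => hf k)) (hf n), ih]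

lemma FKiter_mono {X : Type*} [MetricSpace X] [CompactSpace X] [MeasurableSpace X] [BorelSpace X]
    {κ : X → Measure X} (hp : ∀ x, IsProbabilityMeasure (κ x))
    (hF : ∀ f : X → ℝ, Continuous f → Continuous fun x => ∫ y, f y ∂(κ x))
    {V f g : X → ℝ} (hV : Continuous V) (hf : Continuous f) (hg : Continuous g)
    (h : ∀ x, f x ≤ g x) (n : ℕ) (x : X) : FKiter κ V n f x ≤ FKiter κ V n g x := by
  induction n generalizing x with
  | zero => exact h x
  | succ n ih =>
    exact FK_mono hp hV (FKiter_cont hF hV hf n) (FKiter_cont hF hV hg n) ih x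

lemma FKiter_mul {X : Type*} [MeasurableSpace X]
    (κ : X → Measure X) (V f : X → ℝ) (a : ℝ) (n : ℕ) :
    FKiter κ V n (fun y => a * f y) = fun x => a * FKiter κ V n f x := by
  induction n with
  | zero => rfl
  | succ n ih =>
    funext x
    simp only [FKiter]
    rw [ih, FK_mul]

lemma FKiter_sum {X : Type*} [MetricSpace X] [CompactSpace X] [MeasurableSpace X] [BorelSpace X]
    {κ : X → Measure X} (hp : ∀ x, IsProbabilityMeasure (κ x))
    (hF : ∀ f : X → ℝ, Continuous f → Continuous fun x => ∫ y, f y ∂(κ x))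
    {V : X → ℝ} (hV : Continuous V) (f : ℕ → X → ℝ) (hf : ∀ k, Continuous (f k)) (m n : ℕ) :
    FKiter κ V n (fun y => ∑ k ∈ Finset.range m, f k y)
      = fun x => ∑ k ∈ Finset.range m, FKiter κ V n (f k) x := by
  induction n with
  | zero => rfl
  | succ n ih =>
    funext x
    simp only [FKiter]
    rw [ih, FK_sum hp hV _ (fun k => FKiter_cont hF hV (hf k) n)]

lemma FKiter_add {X : Type*} [MeasurableSpace X]
    (κ : X → Measure X) (V f : X → ℝ) (m n : ℕ) :
    FKiter κ V (m + n) f = FKiter κ V m (FKiter κ V n f) := by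
  induction m with
  | zero => simp [FKiter]
  | succ m ih =>
    rw [Nat.succ_add]
    simp only [FKiter]
    rw [ih]

lemma FKiter_shift {X : Type*} [MeasurableSpace X]
    (κ : X → Measure X) (V f : X → ℝ) (a : ℝ) (n : ℕ) :
    FKiter κ (fun y => V y - a) n f = fun x => Real.exp (-(n * a)) * FKiter κ V n f x := by
  induction n with
  | zero => simp [FKiter]
  | succ n ih =>
    funext x
    simp only [FKiter]
    rw [ih, FK_mul]
    unfold FK
    rw [← integral_const_mul, ← integral_const_mul]
    congr 1; ext y
    rw [Real.exp_sub]
    have : Real.exp (-(((n + 1 : ℕ) : ℝ) * a)) = Real.exp (-(n * a)) / Real.exp a := by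
      rw [← Real.exp_sub]; congr 1; push_cast; ring
    rw [this]; ring

lemma FKiter_one_pos {X : Type*} [MetricSpace X] [CompactSpace X] [MeasurableSpace X] [BorelSpace X]
    {κ : X → Measure X} (hp : ∀ x, IsProbabilityMeasure (κ x))
    (hF : ∀ f : X → ℝ, Continuous f → Continuous fun x => ∫ y, f y ∂(κ x))
    {V : X → ℝ} (hV : Continuous V) {v : ℝ} (hv : ∀ x, |V x| ≤ v) (n : ℕ) (x : X) :
    Real.exp (-(n * v)) ≤ FKiter κ V n 1 x := by
  induction n generalizing x with
  | zero => simp [FKiter]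
  | succ n ih =>
    have := hp x
    have h1 : ∫ _y, Real.exp (-(((n + 1 : ℕ) : ℝ) * v)) ∂(κ x) = Real.exp (-(((n + 1 : ℕ) : ℝ) * v)) := by
      simp
    rw [← h1]
    have hc := FKiter_cont hF hV continuous_one n
    refine integral_mono (integrable_const _) (fk_int (by fun_prop) _) (fun y => ?_)
    have e : Real.exp (-(((n + 1 : ℕ) : ℝ) * v)) = Real.exp (-v) * Real.exp (-(n * v)) := by
      rw [← Real.exp_add]; congr 1; push_cast; ring
    simp only [e]
    exact mul_le_mul (Real.exp_le_exp.2 (neg_le_of_abs_le (hv y))) (ih y) (Real.exp_pos _).le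
      (Real.exp_pos _).le

lemma le_supNorm {X : Type*} [MetricSpace X] [CompactSpace X] {f : X → ℝ} (hf : Continuous f)
    (x : X) : |f x| ≤ supNorm f :=
  le_ciSup (isCompact_range hf.abs).bddAbove x

lemma supNorm_le {X : Type*} [Nonempty X] {f : X → ℝ} {a : ℝ}
    (h : ∀ x, |f x| ≤ a) : supNorm f ≤ a := ciSup_le h

lemma FKiter_abs {X : Type*} [MetricSpace X] [CompactSpace X] [MeasurableSpace X] [BorelSpace X]
    {κ : X → Measure X} (hp : ∀ x, IsProbabilityMeasure (κ x))
    (hF : ∀ f : X → ℝ, Continuous f → Continuous fun x => ∫ y, f y ∂(κ x))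
    {V f : X → ℝ} (hV : Continuous V) (hf : Continuous f) {S : ℝ} (hS : ∀ x, |f x| ≤ S)
    (n : ℕ) (x : X) : |FKiter κ V n f x| ≤ S * FKiter κ V n 1 x := by
  have e : ∀ a : ℝ, a * FKiter κ V n 1 x = FKiter κ V n (fun _ => a) x := by
    intro a
    have := congrFun (FKiter_mul κ V 1 a n) x
    simp only [Pi.one_apply, mul_one] at this
    exact this.symm
  rw [abs_le]
  constructor
  · rw [← neg_mul, e]
    exact FKiter_mono hp hF hV continuous_const hf (fun y => neg_le_of_abs_le (hS y)) n x
  · rw [e]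
    exact FKiter_mono hp hF hV hf continuous_const (fun y => le_of_abs_le (hS y)) n x

lemma FK_step {X : Type*} [MetricSpace X] [CompactSpace X] [MeasurableSpace X] [BorelSpace X]
    (κ : X → Measure X)
    {Ω₀ : Type*} [MeasurableSpace Ω₀] (P₀ : Measure Ω₀) [IsProbabilityMeasure P₀]
    (q : ℝ) (hq0 : 0 ≤ q) (C : ℝ) (hC : 0 < C)
    (R R' : X → X → Ω₀ → X)
    (hRmeas : Measurable fun p : (X × X) × Ω₀ => R p.1.1 p.1.2 p.2)
    (hR'meas : Measurable fun p : (X × X) × Ω₀ => R' p.1.1 p.1.2 p.2)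
    (hRlaw : ∀ x x' : X, Measure.map (R x x') P₀ = κ x)
    (hR'law : ∀ x x' : X, Measure.map (R' x x') P₀ = κ x')
    (hcouple : ∀ x x' : X,
      P₀ {ω | q * dist x x' < dist (R x x' ω) (R' x x' ω)} ≤ ENNReal.ofReal (C * dist x x'))
    (V : X → ℝ) (KV : ℝ≥0) (hV : LipschitzWith KV V) {v : ℝ} (hv : ∀ x, |V x| ≤ v)
    (g B : X → ℝ) (hg : Continuous g) (hB : Continuous B) (hB0 : ∀ x, 0 ≤ B x) (S : ℝ)
    (hS : ∀ x, |g x| ≤ S) (hL : ∀ x x', |g x - g x'| ≤ B x * dist x x') (x x' : X) :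
    |FK κ V g x - FK κ V g x'|
      ≤ (q * FK κ V B x + Real.exp v * (KV * q + 2 * C) * S) * dist x x' := by
  have hVc := hV.continuous
  have mR : Measurable (R x x') :=
    hRmeas.comp (measurable_const.prodMk measurable_id : Measurable fun ω : Ω₀ => ((x, x'), ω))
  have mR' : Measurable (R' x x') :=
    hR'meas.comp (measurable_const.prodMk measurable_id : Measurable fun ω : Ω₀ => ((x, x'), ω))
  have key : ∀ (f : X → ℝ), Continuous f →
      FK κ V f x = ∫ ω, Real.exp (V (R x x' ω)) * f (R x x' ω) ∂P₀ := by
    intro f hf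
    unfold FK
    rw [← hRlaw x x', integral_map mR.aemeasurable]
    exact (by fun_prop : Continuous fun y => Real.exp (V y) * f y).aestronglyMeasurable
  have key' : ∀ (f : X → ℝ), Continuous f →
      FK κ V f x' = ∫ ω, Real.exp (V (R' x x' ω)) * f (R' x x' ω) ∂P₀ := by
    intro f hf
    unfold FK
    rw [← hR'law x x', integral_map mR'.aemeasurable]
    exact (by fun_prop : Continuous fun y => Real.exp (V y) * f y).aestronglyMeasurable
  have int : ∀ (f : X → ℝ), Continuous f → ∀ T : Ω₀ → X, Measurable T →
      Integrable (fun ω => Real.exp (V (T ω)) * f (T ω)) P₀ := by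
    intro f hf T hT
    have hc : Continuous fun y => Real.exp (V y) * f y := by fun_prop
    have : IsFiniteMeasure (Measure.map T P₀) := inferInstance
    exact (fk_int hc (Measure.map T P₀)).comp_measurable hT
  set E : Set Ω₀ := {ω | q * dist x x' < dist (R x x' ω) (R' x x' ω)} with hE
  have mE : MeasurableSet E := measurableSet_lt measurable_const (mR.dist mR')
  have hPE : P₀.real E ≤ C * dist x x' :=
    ENNReal.toReal_le_of_le_ofReal (by positivity) (hcouple x x')
  have hS0 : 0 ≤ S := (abs_nonneg _).trans (hS x)
  have hev : ∀ y, Real.exp (V y) ≤ Real.exp v := fun y =>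
    Real.exp_le_exp.2 (le_of_abs_le (hv y))
  have hexp : ∀ y y', |Real.exp (V y) - Real.exp (V y')| ≤ Real.exp v * (KV * dist y y') := by
    intro y y'
    have h1 : ∀ a b : ℝ, a ≤ v → b ≤ v → b ≤ a → |Real.exp a - Real.exp b| ≤ Real.exp v * |a - b| := by
      intro a b ha hb hab
      rw [abs_of_nonneg (sub_nonneg.2 (Real.exp_le_exp.2 hab)), abs_of_nonneg (sub_nonneg.2 hab)]
      have h2 := Real.add_one_le_exp (b - a)
      have h3 : Real.exp b = Real.exp a * Real.exp (b - a) := by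
        rw [← Real.exp_add]; congr 1; ring
      have h4 := Real.exp_le_exp.2 ha
      have h5 := Real.exp_pos a
      rw [h3]
      calc Real.exp a - Real.exp a * Real.exp (b - a) = Real.exp a * (1 - Real.exp (b - a)) := by ring
        _ ≤ Real.exp a * (a - b) := mul_le_mul_of_nonneg_left (by linarith) h5.le
        _ ≤ Real.exp v * (a - b) := mul_le_mul_of_nonneg_right h4 (by linarith)
    have h6 : |V y - V y'| ≤ KV * dist y y' := by
      have := hV.dist_le_mul y y'; rwa [Real.dist_eq] at this
    have h7 : |Real.exp (V y) - Real.exp (V y')| ≤ Real.exp v * |V y - V y'| := by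
      rcases le_total (V y') (V y) with h | h
      · exact h1 _ _ (le_of_abs_le (hv _)) (le_of_abs_le (hv _)) h
      · rw [abs_sub_comm, abs_sub_comm (V y)]
        exact h1 _ _ (le_of_abs_le (hv _)) (le_of_abs_le (hv _)) h
    exact h7.trans (mul_le_mul_of_nonneg_left h6 (Real.exp_pos _).le)
  have pt : ∀ ω, |Real.exp (V (R x x' ω)) * g (R x x' ω) - Real.exp (V (R' x x' ω)) * g (R' x x' ω)|
      ≤ q * dist x x' * (Real.exp (V (R x x' ω)) * B (R x x' ω))
        + Real.exp v * KV * q * S * dist x x' + E.indicator (fun _ => 2 * Real.exp v * S) ω := by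
    intro ω
    set y := R x x' ω
    set y' := R' x x' ω
    have e1 := Real.exp_pos (V y)
    have e2 := Real.exp_pos (V y')
    have e3 := Real.exp_pos v
    have d0 : 0 ≤ dist x x' := dist_nonneg
    have b0 := hB0 y
    have k0 : (0:ℝ) ≤ KV := KV.2
    by_cases hω : ω ∈ E
    · rw [Set.indicator_of_mem hω]
      have t1 : |Real.exp (V y) * g y| ≤ Real.exp v * S := by
        rw [abs_mul, abs_of_pos e1]
        exact mul_le_mul (hev y) (hS y) (abs_nonneg _) e3.le
      have t2 : |Real.exp (V y') * g y'| ≤ Real.exp v * S := by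
        rw [abs_mul, abs_of_pos e2]
        exact mul_le_mul (hev y') (hS y') (abs_nonneg _) e3.le
      have t3 : 0 ≤ q * dist x x' * (Real.exp (V y) * B y) := by positivity
      have t4 : 0 ≤ Real.exp v * KV * q * S * dist x x' := by positivity
      have := abs_sub (Real.exp (V y) * g y) (Real.exp (V y') * g y')
      linarith
    · rw [Set.indicator_of_notMem hω, add_zero]
      have hd : dist y y' ≤ q * dist x x' := not_lt.1 hω
      have e : Real.exp (V y) * g y - Real.exp (V y') * g y' =
        Real.exp (V y) * (g y - g y') + (Real.exp (V y) - Real.exp (V y')) * g y' := by ring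
      rw [e]
      refine (abs_add_le _ _).trans (add_le_add ?_ ?_)
      · rw [abs_mul, abs_of_pos e1]
        calc _ ≤ Real.exp (V y) * (B y * (q * dist x x')) := by
              refine mul_le_mul_of_nonneg_left ((hL y y').trans ?_) e1.le
              exact mul_le_mul_of_nonneg_left hd b0
          _ = _ := by ring
      · rw [abs_mul]
        calc _ ≤ (Real.exp v * (KV * (q * dist x x'))) * S := by
              refine mul_le_mul ((hexp y y').trans ?_) (hS y') (abs_nonneg _) (by positivity)
              gcongr
          _ = _ := by ring
  rw [key g hg, key' g hg, key B hB, ← integral_sub (int g hg _ mR) (int g hg _ mR')]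
  refine (abs_integral_le_integral_abs).trans ?_
  have i1 := (int B hB _ mR).const_mul (q * dist x x')
  have i2 : Integrable (fun _ : Ω₀ => Real.exp v * KV * q * S * dist x x') P₀ := integrable_const _
  have i3 : Integrable (E.indicator (fun _ : Ω₀ => 2 * Real.exp v * S)) P₀ :=
    (integrable_const _).indicator mE
  have i4 : Integrable (fun ω => q * dist x x' * (Real.exp (V (R x x' ω)) * B (R x x' ω))
        + Real.exp v * KV * q * S * dist x x') P₀ := i1.add i2
  refine (integral_mono ((int g hg _ mR).sub (int g hg _ mR')).abs (i4.add i3) pt).trans ?_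
  have h := integral_add i4 i3
  simp only [Pi.add_apply]
  rw [h, integral_add i1 i2, integral_const_mul, integral_indicator_const _ mE]
  simp only [integral_const, probReal_univ, smul_eq_mul, one_mul]
  have : P₀.real E * (2 * Real.exp v * S) ≤ C * dist x x' * (2 * Real.exp v * S) :=
    mul_le_mul_of_nonneg_right hPE (by positivity)
  linarith

lemma kIter_lower {X : Type*} [MetricSpace X] [CompactSpace X] [MeasurableSpace X] [BorelSpace X]
    {κ : X → Measure X} (hm : Measurable κ) (hp : ∀ x, IsProbabilityMeasure (κ x))
    (hF : ∀ f : X → ℝ, Continuous f → Continuous fun x => ∫ y, f y ∂(κ x))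
    {V : X → ℝ} (hV : Continuous V) {v : ℝ} (hv : ∀ x, |V x| ≤ v) (n : ℕ)
    (g : X → ℝ) (hg : Continuous g) (hg0 : ∀ x, 0 ≤ g x) (x : X) :
    ∫⁻ y, ENNReal.ofReal (g y) ∂(kIter κ n x)
      ≤ ENNReal.ofReal (Real.exp (n * v) * FKiter κ V n g x) := by
  induction n generalizing g with
  | zero =>
    simp only [kIter, FKiter]
    rw [lintegral_dirac' _ (by fun_prop)]
    simp
  | succ n ih =>
    simp only [kIter]
    rw [Measure.lintegral_bind hm.aemeasurable (by fun_prop)]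
    have e : ∀ y, ∫⁻ z, ENNReal.ofReal (g z) ∂(κ y) = ENNReal.ofReal (∫ z, g z ∂(κ y)) := by
      intro y
      have := hp y
      rw [ofReal_integral_eq_lintegral_ofReal (fk_int hg _) (Eventually.of_forall hg0)]
    simp only [e]
    refine (ih _ (hF g hg) (fun y => integral_nonneg hg0)).trans (ENNReal.ofReal_le_ofReal ?_)
    have h1 : ∀ y, ∫ z, g z ∂(κ y) ≤ Real.exp v * FK κ V g y := by
      intro y
      have := hp y
      unfold FK
      rw [← integral_const_mul]
      refine integral_mono (fk_int hg _) (fk_int (by fun_prop) _) (fun z => ?_)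
      have : 1 ≤ Real.exp v * Real.exp (V z) := by
        rw [← Real.exp_add, Real.one_le_exp_iff]
        linarith [neg_le_of_abs_le (hv z)]
      have := mul_le_mul_of_nonneg_right this (hg0 z)
      simp only
      linarith
    have hc := FK_cont hF hV hg
    have h2 := FKiter_mono hp hF hV (hF g hg) (by fun_prop : Continuous fun y => Real.exp v * FK κ V g y)
      h1 n x
    rw [FKiter_mul] at h2
    have h3 : FKiter κ V (n + 1) g = FKiter κ V n (FK κ V g) := FKiter_add κ V g n 1
    rw [h3]
    have h4 : Real.exp (((n + 1 : ℕ) : ℝ) * v) = Real.exp (n * v) * Real.exp v := by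
      rw [← Real.exp_add]; congr 1; push_cast; ring
    rw [h4, mul_assoc]
    exact mul_le_mul_of_nonneg_left h2 (Real.exp_pos _).le

def StepHyp {X : Type*} [MetricSpace X] [MeasurableSpace X]
    (κ : X → Measure X) (V : X → ℝ) (q K : ℝ) : Prop :=
  ∀ g B : X → ℝ, Continuous g → Continuous B → (∀ x, 0 ≤ B x) → ∀ S : ℝ,
    (∀ x, |g x| ≤ S) → (∀ x x', |g x - g x'| ≤ B x * dist x x') → ∀ x x' : X,
    |FK κ V g x - FK κ V g x'| ≤ (q * FK κ V B x + K * S) * dist x x'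

lemma lip_iter {X : Type*} [MetricSpace X] [CompactSpace X] [MeasurableSpace X] [BorelSpace X]
    {κ : X → Measure X} (hp : ∀ x, IsProbabilityMeasure (κ x))
    (hF : ∀ f : X → ℝ, Continuous f → Continuous fun x => ∫ y, f y ∂(κ x))
    {V : X → ℝ} (hV : Continuous V) {v : ℝ} (hv : ∀ x, |V x| ≤ v) {q K : ℝ} (hq : 0 ≤ q)
    (hK : 0 ≤ K) (hst : StepHyp κ V q K) (g : ℕ → X → ℝ) (hg : ∀ n, Continuous (g n))
    (hgs : ∀ n x x', |g (n+1) x - g (n+1) x'| = |FK κ V (g n) x - FK κ V (g n) x'|)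
    (S L : ℝ) (hL : 0 ≤ L) (hS : ∀ n x, |g n x| ≤ S)
    (h0 : ∀ x x', |g 0 x - g 0 x'| ≤ L * dist x x') (n : ℕ) (x x' : X) :
    |g n x - g n x'| ≤ (L * q ^ n * FKiter κ V n 1 x
      + K * S * ∑ k ∈ Finset.range n, q ^ k * FKiter κ V k 1 x) * dist x x' := by
  induction n generalizing x x' with
  | zero => simpa [FKiter] using h0 x x'
  | succ n ih =>
    have hS0 : 0 ≤ S := (abs_nonneg _).trans (hS 0 x)
    have hh : ∀ k y, 0 ≤ FKiter κ V k 1 y := fun k y =>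
      (Real.exp_pos _).le.trans (FKiter_one_pos hp hF hV hv k y)
    have hc : ∀ k, Continuous (FKiter κ V k 1) := fun k => FKiter_cont hF hV continuous_one k
    have hc1 : Continuous fun y => ∑ k ∈ Finset.range n, q ^ k * FKiter κ V k 1 y :=
      continuous_finsetSum _ (fun k _ => continuous_const.mul (hc k))
    have hcn := hc n
    rw [hgs]
    have := hst (g n) (fun y => L * q ^ n * FKiter κ V n 1 y
      + K * S * ∑ k ∈ Finset.range n, q ^ k * FKiter κ V k 1 y) (hg n)
      (by fun_prop) (fun y => by
        have := hh n y
        have : 0 ≤ ∑ k ∈ Finset.range n, q ^ k * FKiter κ V k 1 y :=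
          Finset.sum_nonneg (fun k _ => mul_nonneg (pow_nonneg hq k) (hh k y))
        positivity) S (hS n) ih x x'
    refine this.trans (le_of_eq ?_)
    congr 1
    rw [FK_add hp hV (by fun_prop) (by fun_prop), FK_mul, FK_mul,
      FK_sum hp hV (fun k y => q ^ k * FKiter κ V k 1 y) (fun k => continuous_const.mul (hc k)),
      Finset.sum_range_succ']
    simp only [FK_mul, pow_succ, FKiter, Pi.one_apply, pow_zero, mul_one]
    have : ∑ k ∈ Finset.range n, q ^ k * q * FK κ V (FKiter κ V k 1) x
        = q * ∑ k ∈ Finset.range n, q ^ k * FK κ V (FKiter κ V k 1) x := by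
      rw [Finset.mul_sum]; refine Finset.sum_congr rfl (fun k _ => by ring)
    rw [this]
    ring

lemma key_bound {X : Type*} [MetricSpace X] [CompactSpace X] [MeasurableSpace X] [BorelSpace X]
    [Nonempty X]
    {κ : X → Measure X} (hm : Measurable κ) (hp : ∀ x, IsProbabilityMeasure (κ x))
    (hF : ∀ f : X → ℝ, Continuous f → Continuous fun x => ∫ y, f y ∂(κ x))
    (hI : ∀ ε : ℝ, 0 < ε → ∃ (N : ℕ) (p : ℝ≥0∞), 0 < p ∧
      ∀ x y : X, p < kIter κ N x (Metric.ball y ε))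
    (v q K A : ℝ) (hq : 0 ≤ q) (hK : 0 ≤ K) (hA : 0 ≤ A) :
    ∃ D : ℝ, ∀ V : X → ℝ, Continuous V → (∀ x, |V x| ≤ v) → StepHyp κ V q K →
      (∀ n x, ∑ k ∈ Finset.range n, q ^ k * FKiter κ V k 1 x ≤ A) →
      (∃ A2, ∀ n x, ∑ k ∈ Finset.range n, FKiter κ V k 1 x ≤ A2) →
      ∀ n x, FKiter κ V n 1 x ≤ D := by
  have hKA : 0 ≤ K * A := mul_nonneg hK hA
  obtain ⟨N, p, hp0, hNp⟩ := hI (1 / (4 * (K * A + 1))) (by positivity)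
  obtain ⟨z⟩ := ‹Nonempty X›
  have hptop : p ≠ ∞ := (hNp z z).ne_top
  have hpr : 0 < p.toReal := ENNReal.toReal_pos hp0.ne' hptop
  refine ⟨2 * Real.exp (N * v) / p.toReal, ?_⟩
  intro V hV hv hst hsA ⟨A2, hA2⟩ n x
  have hh : ∀ k y, 0 ≤ FKiter κ V k 1 y := fun k y =>
    (Real.exp_pos _).le.trans (FKiter_one_pos hp hF hV hv k y)
  have hc : ∀ k, Continuous (FKiter κ V k 1) := fun k => FKiter_cont hF hV continuous_one k
  set G : ℕ → X → ℝ := fun n y => ∑ k ∈ Finset.range n, FKiter κ V k 1 y with hG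
  have hGc : ∀ n, Continuous (G n) := fun n => continuous_finsetSum _ (fun k _ => hc k)
  have hG0 : ∀ n y, 0 ≤ G n y := fun n y => Finset.sum_nonneg (fun k _ => hh k y)
  have hGs : ∀ n y, G (n+1) y = FK κ V (G n) y + 1 := by
    intro n y
    simp only [hG]
    rw [Finset.sum_range_succ', FK_sum hp hV _ hc]
    simp [FKiter]
  have hGm : ∀ m j y, FKiter κ V j (G m) y ≤ G (j + m) y := by
    intro m j y
    simp only [hG]
    rw [FKiter_sum hp hF hV _ hc, Finset.sum_range_add]
    simp only [FKiter_add]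
    have := hG0 j y
    simp only [hG] at this
    linarith
  have hbdd : BddAbove (Set.range fun p : ℕ × X => G p.1 p.2) :=
    ⟨A2, by rintro _ ⟨p, rfl⟩; exact hA2 _ _⟩
  set g := ⨆ p : ℕ × X, G p.1 p.2 with hg
  have hGg : ∀ n y, G n y ≤ g := fun n y => le_ciSup hbdd (n, y)
  have hg1 : 1 ≤ g := by
    have := hGg 1 z
    simpa [hG, FKiter] using this
  obtain ⟨⟨n0, y0⟩, hn0⟩ := exists_lt_of_lt_ciSup (show 3 / 4 * g < ⨆ p : ℕ × X, G p.1 p.2 by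
    rw [← hg]; linarith)
  simp only at hn0
  have hlip := lip_iter hp hF hV hv hq hK hst G hGc
    (fun n x x' => by rw [hGs, hGs]; congr 1; ring) g 0 le_rfl
    (fun n y => by rw [abs_of_nonneg (hG0 n y)]; exact hGg n y)
    (fun x x' => by simp [hG]) n0
  have hball : ∀ y ∈ Metric.ball y0 (1 / (4 * (K * A + 1))), g / 2 ≤ G n0 y := by
    intro y hy
    have h1 := hlip y0 y
    have h2 : dist y0 y < 1 / (4 * (K * A + 1)) := by rw [dist_comm]; exact hy
    have h3 : (0 * q ^ n0 * FKiter κ V n0 1 y0 + K * g * ∑ k ∈ Finset.range n0, q ^ k * FKiter κ V k 1 y0)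
        * dist y0 y ≤ (K * g * A) * (1 / (4 * (K * A + 1))) := by
      have hs := hsA n0 y0
      have hKg : 0 ≤ K * g := mul_nonneg hK (by linarith)
      have := mul_le_mul_of_nonneg_left hs hKg
      refine mul_le_mul (by linarith) h2.le dist_nonneg (mul_nonneg hKg hA)
    have h4 : (K * g * A) * (1 / (4 * (K * A + 1))) ≤ g / 4 := by
      rw [mul_one_div, div_le_div_iff₀ (by positivity) (by norm_num)]
      nlinarith
    have := le_of_abs_le h1
    linarith
  have hlow : ∀ x, Real.exp (-(N * v)) * p.toReal * (g / 2) ≤ G (N + n0) x := by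
    intro x
    refine le_trans ?_ (hGm n0 N x)
    have h1 := kIter_lower hm hp hF hV hv N (G n0) (hGc n0) (hG0 n0) x
    have h2 : ENNReal.ofReal (g / 2) * p ≤ ∫⁻ y, ENNReal.ofReal (G n0 y) ∂(kIter κ N x) := by
      calc ENNReal.ofReal (g / 2) * p
          ≤ ENNReal.ofReal (g / 2) * kIter κ N x (Metric.ball y0 (1 / (4 * (K * A + 1)))) := by
            gcongr; exact (hNp x y0).le
        _ = ∫⁻ y in Metric.ball y0 (1 / (4 * (K * A + 1))), ENNReal.ofReal (g / 2) ∂(kIter κ N x) := by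
            rw [setLIntegral_const]
        _ ≤ ∫⁻ y in Metric.ball y0 (1 / (4 * (K * A + 1))), ENNReal.ofReal (G n0 y) ∂(kIter κ N x) :=
            setLIntegral_mono' Metric.isOpen_ball.measurableSet
              (fun y hy => ENNReal.ofReal_le_ofReal (hball y hy))
        _ ≤ _ := setLIntegral_le_lintegral _ _
    have h3 := h2.trans h1
    rw [← ENNReal.ofReal_toReal hptop, ← ENNReal.ofReal_mul (by linarith)] at h3
    have hQ0 : 0 ≤ FKiter κ V N (G n0) x := by
      have := FKiter_mono hp hF hV (f := fun y => 0 * (G n0) y) (g := G n0)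
        (by have := hGc n0; fun_prop) (hGc n0) (fun y => by simpa using hG0 n0 y) N x
      rw [FKiter_mul] at this
      simpa using this
    have h4 := (ENNReal.ofReal_le_ofReal_iff (mul_nonneg (Real.exp_pos _).le hQ0)).1 h3
    calc Real.exp (-(N * v)) * p.toReal * (g / 2) = Real.exp (-(N * v)) * (g / 2 * p.toReal) := by ring
      _ ≤ Real.exp (-(N * v)) * (Real.exp (N * v) * FKiter κ V N (G n0) x) :=
        mul_le_mul_of_nonneg_left h4 (Real.exp_pos _).le
      _ = _ := by rw [← mul_assoc, ← Real.exp_add]; simp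
  have hfin := FKiter_mono hp hF hV
    (f := fun y => (Real.exp (-(N * v)) * p.toReal * (g / 2)) * (1 : X → ℝ) y) (g := G (N + n0))
    (by simp only [Pi.one_apply]; fun_prop) (hGc _) (fun y => by simpa using hlow y) n x
  rw [FKiter_mul] at hfin
  have h5 := (hfin.trans (hGm _ _ _)).trans (hGg _ _)
  rw [le_div_iff₀ hpr]
  rw [Real.exp_neg] at h5
  have he := Real.exp_pos (N * v)
  have h6 : FKiter κ V n 1 x * p.toReal * g ≤ 2 * Real.exp (N * v) * g := by
    have := mul_le_mul_of_nonneg_left h5 (by positivity : 0 ≤ 2 * Real.exp (N * v))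
    calc _ = 2 * Real.exp (N * v) * ((Real.exp (N * v))⁻¹ * p.toReal * (g / 2) * FKiter κ V n 1 x) := by
          field_simp
      _ ≤ _ := this
  exact le_of_mul_le_mul_right h6 (by linarith)

lemma growth {X : Type*} [MetricSpace X] [CompactSpace X] [MeasurableSpace X] [BorelSpace X]
    [Nonempty X]
    {κ : X → Measure X} (hp : ∀ x, IsProbabilityMeasure (κ x))
    (hF : ∀ f : X → ℝ, Continuous f → Continuous fun x => ∫ y, f y ∂(κ x))
    {V : X → ℝ} (hV : Continuous V) {v : ℝ} (hv : ∀ x, |V x| ≤ v) :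
    ∃ ℓ : ℝ, (∀ n : ℕ, Real.exp (n * ℓ) ≤ supNorm (FKiter κ V n 1)) ∧
      ∀ ρ : ℝ, 0 < ρ → ρ < 1 → ∃ A : ℝ, 0 ≤ A ∧ ∀ n : ℕ,
        ∑ k ∈ Finset.range n, ρ ^ k * (Real.exp (-(k * ℓ)) * supNorm (FKiter κ V k 1)) ≤ A := by
  obtain ⟨z⟩ := ‹Nonempty X›
  have : Nonempty X := ⟨z⟩
  have hc : ∀ k, Continuous (FKiter κ V k 1) := fun k => FKiter_cont hF hV continuous_one k
  set M : ℕ → ℝ := fun n => supNorm (FKiter κ V n 1) with hM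
  have hle : ∀ n x, FKiter κ V n 1 x ≤ M n := fun n x => (le_abs_self _).trans (le_supNorm (hc n) x)
  have hlow : ∀ n : ℕ, Real.exp (-(n * v)) ≤ M n := fun n =>
    (FKiter_one_pos hp hF hV hv n z).trans (hle n z)
  have hpos : ∀ n, 0 < M n := fun n => (Real.exp_pos _).trans_le (hlow n)
  have hsub : Subadditive fun n => Real.log (M n) := by
    intro m n
    rw [← Real.log_mul (hpos m).ne' (hpos n).ne']
    refine Real.log_le_log (hpos _) (supNorm_le fun x => ?_)
    rw [FKiter_add]
    refine (FKiter_abs hp hF hV (hc n) (le_supNorm (hc n)) m x).trans ?_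
    rw [mul_comm]
    exact mul_le_mul_of_nonneg_right (hle m x) (hpos n).le
  have hv0 : 0 ≤ v := (abs_nonneg _).trans (hv z)
  have hbdd : BddBelow (Set.range fun n : ℕ => Real.log (M n) / n) := by
    refine ⟨-v, ?_⟩
    rintro _ ⟨n, rfl⟩
    rcases Nat.eq_zero_or_pos n with rfl | hn
    · simpa using hv0
    · have hn' : (0 : ℝ) < n := by exact_mod_cast hn
      simp only
      rw [le_div_iff₀ hn', Real.le_log_iff_exp_le (hpos n)]
      convert hlow n using 2; ring
  refine ⟨hsub.lim, fun n => ?_, fun ρ h0 h1 => ?_⟩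
  · rcases Nat.eq_zero_or_pos n with rfl | hn
    · simpa [hM, FKiter] using hlow 0
    · have hn' : (0 : ℝ) < n := by exact_mod_cast hn
      have := hsub.lim_le_div hbdd hn.ne'
      rw [le_div_iff₀ hn', Real.le_log_iff_exp_le (hpos n)] at this
      rwa [mul_comm]
  · have hlog : Real.log ρ < 0 := Real.log_neg h0 h1
    set δ := -Real.log ρ / 2 with hδ
    have hδ0 : 0 < δ := by rw [hδ]; linarith
    have hev := (hsub.tendsto_lim hbdd).eventually (gt_mem_nhds (show hsub.lim < hsub.lim + δ by linarith))
    have hsum : Summable fun k : ℕ => ρ ^ k * (Real.exp (-(k * hsub.lim)) * M k) := by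
      refine Summable.of_norm_bounded_eventually_nat (g := fun k => Real.exp (-δ) ^ k)
        (summable_geometric_of_lt_one (Real.exp_pos _).le (by rw [Real.exp_lt_one_iff]; linarith)) ?_
      filter_upwards [hev, eventually_gt_atTop 0] with k hk hk0
      have hk' : (0 : ℝ) < k := by exact_mod_cast hk0
      rw [div_lt_iff₀ hk', Real.log_lt_iff_lt_exp (hpos k)] at hk
      rw [Real.norm_of_nonneg (by have := hpos k; positivity)]
      have e1 : ρ ^ k = Real.exp (k * (-2 * δ)) := by
        rw [Real.exp_nat_mul]
        congr 1
        rw [hδ, show -2 * (-Real.log ρ / 2) = Real.log ρ by ring, Real.exp_log h0]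
      calc ρ ^ k * (Real.exp (-(k * hsub.lim)) * M k)
          ≤ ρ ^ k * (Real.exp (-(k * hsub.lim)) * Real.exp ((hsub.lim + δ) * k)) := by gcongr
        _ = Real.exp (-δ) ^ k := by
          rw [e1, ← Real.exp_add, ← Real.exp_add, ← Real.exp_nat_mul]; congr 1; ring
    have hnn : ∀ k : ℕ, 0 ≤ ρ ^ k * (Real.exp (-(k * hsub.lim)) * M k) := fun k => by
      have := hpos k; positivity
    exact ⟨_, tsum_nonneg hnn, fun n => hsum.sum_le_tsum _ (fun k _ => hnn k)⟩

lemma lipConst_spec {X : Type*} [MetricSpace X] {f : X → ℝ} {Kf : ℝ≥0} (hf : LipschitzWith Kf f) :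
    0 ≤ lipConst f ∧ ∀ x y, |f x - f y| ≤ lipConst f * dist x y := by
  constructor
  · refine Real.sSup_nonneg ?_
    rintro c ⟨x, y, _, rfl⟩
    positivity
  · intro x y
    by_cases h : x = y
    · simp [h]
    · rw [← div_le_iff₀ (dist_pos.2 h)]
      refine le_csSup ⟨Kf, ?_⟩ ⟨x, y, h, rfl⟩
      rintro c ⟨a, b, hab, rfl⟩
      rw [div_le_iff₀ (dist_pos.2 hab), ← Real.dist_eq]
      exact hf.dist_le_mul a b

theorem FK_lipschitz_estimate
    {X : Type*} [MetricSpace X] [CompactSpace X] [MeasurableSpace X] [BorelSpace X]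
    (κ : X → Measure X) (hκmeas : Measurable κ)
    (hκprob : ∀ x, IsProbabilityMeasure (κ x))
    (hFeller : ∀ f : X → ℝ, Continuous f → Continuous fun x => ∫ y, f y ∂(κ x))
    -- hypothesis (I): uniform irreducibility
    (hI : ∀ ε : ℝ, 0 < ε → ∃ (N : ℕ) (p : ℝ≥0∞), 0 < p ∧
      ∀ x y : X, p < kIter κ N x (Metric.ball y ε))
    -- hypothesis (C): coupling
    {Ω₀ : Type*} [MeasurableSpace Ω₀] (P₀ : Measure Ω₀) [IsProbabilityMeasure P₀]
    (q : ℝ) (hq0 : 0 ≤ q) (hq1 : q < 1) (C : ℝ) (hC : 0 < C)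
    (R R' : X → X → Ω₀ → X)
    (hRmeas : Measurable fun p : (X × X) × Ω₀ => R p.1.1 p.1.2 p.2)
    (hR'meas : Measurable fun p : (X × X) × Ω₀ => R' p.1.1 p.1.2 p.2)
    (hRlaw : ∀ x x' : X, Measure.map (R x x') P₀ = κ x)
    (hR'law : ∀ x x' : X, Measure.map (R' x x') P₀ = κ x')
    (hcouple : ∀ x x' : X,
      P₀ {ω | q * dist x x' < dist (R x x' ω) (R' x x' ω)} ≤ ENNReal.ofReal (C * dist x x'))
    (V : X → ℝ) (KV : ℝ≥0) (hV : LipschitzWith KV V) :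
    ∃ CV : ℝ, ∀ (f : X → ℝ) (Kf : ℝ≥0), LipschitzWith Kf f →
      ∀ (n : ℕ) (x x' : X),
        |FKiter κ V n f x - FKiter κ V n f x'|
          ≤ CV * lipNorm f * supNorm (FKiter κ V n 1) * dist x x' := by
  rcases isEmpty_or_nonempty X with hX | hX
  · exact ⟨0, fun f Kf _ n x => (hX.false x).elim⟩
  have hVc := hV.continuous
  set q' : ℝ := max q (1 / 2) with hq'
  have hq'0 : 0 < q' := lt_of_lt_of_le (by norm_num) (le_max_right _ _)
  have hq'1 : q' < 1 := max_lt hq1 (by norm_num)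
  have hcouple' : ∀ x x' : X,
      P₀ {ω | q' * dist x x' < dist (R x x' ω) (R' x x' ω)} ≤ ENNReal.ofReal (C * dist x x') := by
    intro x x'
    refine (measure_mono fun ω hω => ?_).trans (hcouple x x')
    exact lt_of_le_of_lt (mul_le_mul_of_nonneg_right (le_max_left _ _) dist_nonneg) hω
  set v := supNorm V
  have hv : ∀ x, |V x| ≤ v := le_supNorm hVc
  obtain ⟨ℓ, hlow, hsum⟩ := growth hκprob hFeller hVc hv
  obtain ⟨A, hA0, hA⟩ := hsum q' hq'0 hq'1
  set v' := v + |ℓ| + 1 with hv'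
  set K := Real.exp v' * (KV * q' + 2 * C) with hKdef
  have hK : 0 ≤ K := by positivity
  have hc : ∀ k, Continuous (FKiter κ V k 1) := fun k => FKiter_cont hFeller hVc continuous_one k
  have hle : ∀ n x, FKiter κ V n 1 x ≤ supNorm (FKiter κ V n 1) :=
    fun n x => (le_abs_self _).trans (le_supNorm (hc n) x)
  have hMpos : ∀ n, 0 < supNorm (FKiter κ V n 1) := fun n => (Real.exp_pos _).trans_le (hlow n)
  -- properties of the shifted potentials
  have hvt : ∀ τ : ℝ, 0 ≤ τ → τ ≤ 1 → ∀ x, |V x - (ℓ + τ)| ≤ v' := by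
    intro τ h0 h1 x
    have h2 := hv x
    have h3 := le_abs_self ℓ
    have h4 := neg_abs_le ℓ
    rw [abs_le] at h2 ⊢
    constructor <;> linarith [h2.1, h2.2]
  have hst : ∀ τ : ℝ, 0 ≤ τ → τ ≤ 1 → StepHyp κ (fun x => V x - (ℓ + τ)) q' K := by
    intro τ h0 h1 g B hg hB hB0 S hS hL x x'
    have hVt : LipschitzWith KV (fun x => V x - (ℓ + τ)) := by
      refine LipschitzWith.of_dist_le_mul fun a b => ?_
      rw [dist_sub_right]
      exact hV.dist_le_mul a b
    exact FK_step κ P₀ q' hq'0.le C hC R R' hRmeas hR'meas hRlaw hR'law hcouple' _ KV hVt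
      (hvt τ h0 h1) g B hg hB hB0 S hS hL x x'
  have hsA : ∀ τ : ℝ, 0 ≤ τ → ∀ n x,
      ∑ k ∈ Finset.range n, q' ^ k * FKiter κ (fun x => V x - (ℓ + τ)) k 1 x ≤ A := by
    intro τ h0 n x
    refine le_trans (Finset.sum_le_sum fun k _ => ?_) (hA n)
    rw [FKiter_shift]
    refine mul_le_mul_of_nonneg_left ?_ (pow_nonneg hq'0.le k)
    have := hMpos k
    refine (mul_le_mul_of_nonneg_left (hle k x) (Real.exp_pos _).le).trans ?_
    refine mul_le_mul_of_nonneg_right (Real.exp_le_exp.2 ?_) this.le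
    have : (0:ℝ) ≤ k * τ := by positivity
    linarith
  obtain ⟨D, hD⟩ := key_bound hκmeas hκprob hFeller hI v' q' K A hq'0.le hK hA0
  have hDt : ∀ τ : ℝ, 0 < τ → τ ≤ 1 → ∀ (n : ℕ) x,
      Real.exp (-(n * (ℓ + τ))) * FKiter κ V n 1 x ≤ D := by
    intro τ h0 h1 n x
    have h := hD (fun x => V x - (ℓ + τ)) (by fun_prop) (hvt τ h0.le h1) (hst τ h0.le h1)
      (hsA τ h0.le) ?_ n x
    · rwa [FKiter_shift] at h
    · obtain ⟨A2, _, hA2⟩ := hsum (Real.exp (-τ)) (Real.exp_pos _)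
        (by rw [Real.exp_lt_one_iff]; linarith)
      refine ⟨A2, fun n x => le_trans (Finset.sum_le_sum fun k _ => ?_) (hA2 n)⟩
      rw [FKiter_shift, ← mul_assoc, ← Real.exp_nat_mul, ← Real.exp_add]
      refine (mul_le_mul_of_nonneg_left (hle k x) (Real.exp_pos _).le).trans (le_of_eq ?_)
      congr 2; ring
  have hD0 : ∀ (n : ℕ) x, Real.exp (-(n * (ℓ + 0))) * FKiter κ V n 1 x ≤ D := by
    intro n x
    have ht : Tendsto (fun τ : ℝ => Real.exp (-(n * (ℓ + τ))) * FKiter κ V n 1 x) (𝓝[>] 0)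
        (𝓝 (Real.exp (-(n * (ℓ + 0))) * FKiter κ V n 1 x)) := by
      refine Tendsto.mono_left ?_ nhdsWithin_le_nhds
      exact Continuous.tendsto (by fun_prop) 0
    refine le_of_tendsto ht ?_
    filter_upwards [Ioc_mem_nhdsGT (show (0:ℝ) < 1 by norm_num)] with τ hτ
    exact hDt τ hτ.1 hτ.2 n x
  obtain ⟨z⟩ := hX
  have hD1 : 1 ≤ D := by simpa [FKiter] using hD0 0 z
  set W : X → ℝ := fun x => V x - (ℓ + 0) with hW
  have hWc : Continuous W := by fun_prop
  have hWD : ∀ n x, FKiter κ W n 1 x ≤ D := by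
    intro n x
    rw [hW, FKiter_shift]; exact hD0 n x
  refine ⟨D + K * D * A, fun f Kf hf n x x' => ?_⟩
  have hfc := hf.continuous
  obtain ⟨hL0, hL⟩ := lipConst_spec hf
  have hfs := le_supNorm hfc
  have hs0 : 0 ≤ supNorm f := (abs_nonneg _).trans (hfs z)
  have hmain := lip_iter hκprob hFeller hWc (hvt 0 le_rfl zero_le_one) hq'0.le hK
    (hst 0 le_rfl zero_le_one) (fun n => FKiter κ W n f) (fun n => FKiter_cont hFeller hWc hfc n)
    (fun n x x' => rfl) (supNorm f * D) (lipConst f) hL0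
    (fun n x => (FKiter_abs hκprob hFeller hWc hfc hfs n x).trans
      (mul_le_mul_of_nonneg_left (hWD n x) hs0)) hL n x x'
  have hb : |FKiter κ W n f x - FKiter κ W n f x'| ≤ (D + K * D * A) * lipNorm f * dist x x' := by
    refine hmain.trans (mul_le_mul_of_nonneg_right ?_ dist_nonneg)
    have a1 : lipConst f * q' ^ n * FKiter κ W n 1 x ≤ lipConst f * 1 * D := by
      have hnn : 0 ≤ FKiter κ W n 1 x :=
        (Real.exp_pos _).le.trans (FKiter_one_pos hκprob hFeller hWc (hvt 0 le_rfl zero_le_one) n x)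
      have : q' ^ n ≤ 1 := pow_le_one₀ hq'0.le hq'1.le
      exact mul_le_mul (mul_le_mul_of_nonneg_left this hL0) (hWD n x) hnn (by positivity)
    have a2 : K * (supNorm f * D) * ∑ k ∈ Finset.range n, q' ^ k * FKiter κ W k 1 x
        ≤ K * (supNorm f * D) * A :=
      mul_le_mul_of_nonneg_left (hsA 0 le_rfl n x) (by positivity)
    have a3 : 0 ≤ D * supNorm f := by positivity
    have a4 : 0 ≤ K * D * A * lipConst f := by positivity
    unfold lipNorm
    nlinarith
  have e : ∀ y, FKiter κ V n f y = Real.exp (n * ℓ) * FKiter κ W n f y := by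
    intro y
    rw [hW, FKiter_shift, ← mul_assoc, ← Real.exp_add]
    simp
  rw [e, e, ← mul_sub, abs_mul, abs_of_pos (Real.exp_pos _)]
  calc _ ≤ supNorm (FKiter κ V n 1) * ((D + K * D * A) * lipNorm f * dist x x') :=
        mul_le_mul (hlow n) hb (abs_nonneg _) (hMpos n).le
    _ = _ := by ring
end

section
/- Lipschitz constant of the Feynman–Kac semigroup is controlled by the rescaled supremum norms: Assume hypothesis (C), and let V : X → ℝ be Lipschitz continuous. Set λ₁ := inf_{n≥1} ‖Q_n^V 1‖_∞^{1/n} and M_n := max_{0≤k≤n} λ₁^{−k}·‖Q_k^V 1‖_∞. Then there exists a constant C_V < ∞ such that for every Lipschitz continuous f : X → ℝ and every n ∈ ℕ, Lip(Q_n^V f) ≤ C_V·‖f‖_L·λ₁^n·M_n; equivalently, λ₁^{−n}·Lip(Q_n^V f) ≤ C_V·‖f‖_L·M_n. -/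
open MeasureTheory Filter Topology
open scoped ENNReal NNReal

lemma aux_exp_diff (E a b : ℝ) (ha : Real.exp a ≤ E) (hb : Real.exp b ≤ E) :
    |Real.exp a - Real.exp b| ≤ E * |a - b| := by
  have key : ∀ u v : ℝ, Real.exp u ≤ E → Real.exp u - Real.exp v ≤ E * |u - v| := by
    intro u v hu
    have h1 := Real.add_one_le_exp (v - u)
    have h2 : Real.exp v = Real.exp u * Real.exp (v - u) := by
      rw [← Real.exp_add]; congr 1; ring
    have h3 := Real.exp_pos u
    have h4 : Real.exp u - Real.exp v ≤ Real.exp u * (u - v) := by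
      rw [h2]; nlinarith
    calc _ ≤ Real.exp u * (u - v) := h4
      _ ≤ Real.exp u * |u - v| := by gcongr; exact le_abs_self _
      _ ≤ E * |u - v| := by gcongr
  rw [abs_le]
  constructor
  · have := key b a hb
    rw [abs_sub_comm] at this
    linarith
  · exact key a b ha

lemma aux_int {X : Type*} [MetricSpace X] [CompactSpace X] [MeasurableSpace X] [BorelSpace X]
    (μ : Measure X) [IsProbabilityMeasure μ] (f : X → ℝ) (hf : Continuous f) :
    Integrable f μ :=
  hf.integrable_of_hasCompactSupport (HasCompactSupport.of_compactSpace f)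

lemma aux_abs_le_supNorm {X : Type*} [TopologicalSpace X] [CompactSpace X] (f : X → ℝ)
    (hf : Continuous f) (x : X) : |f x| ≤ supNorm f :=
  le_ciSup (f := fun x => |f x|) (isCompact_range hf.abs).bddAbove x

lemma aux_supNorm_nonneg {X : Type*} (f : X → ℝ) : 0 ≤ supNorm f :=
  Real.iSup_nonneg fun _ => abs_nonneg _

lemma aux_lipConst_nonneg {X : Type*} [MetricSpace X] (f : X → ℝ) : 0 ≤ lipConst f := by
  apply Real.sSup_nonneg
  rintro c ⟨x, y, _, rfl⟩
  positivity

lemma aux_lipConst {X : Type*} [MetricSpace X] (f : X → ℝ) (K : ℝ≥0) (hf : LipschitzWith K f)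
    (x y : X) : |f x - f y| ≤ lipConst f * dist x y := by
  by_cases hxy : x = y
  · subst hxy; simp
  have hd : 0 < dist x y := dist_pos.2 hxy
  rw [← div_le_iff₀ hd]
  refine le_csSup ⟨K, ?_⟩ ⟨x, y, hxy, rfl⟩
  rintro c ⟨u, v, huv, rfl⟩
  rw [div_le_iff₀ (dist_pos.2 huv)]
  exact hf.dist_le_mul u v

section FKsec
variable {X : Type*} [MetricSpace X] [CompactSpace X] [MeasurableSpace X] [BorelSpace X]

lemma aux_cont (κ : X → Measure X)
    (hFeller : ∀ f : X → ℝ, Continuous f → Continuous fun x => ∫ y, f y ∂(κ x))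
    (V : X → ℝ) (hV : Continuous V) (f : X → ℝ) (hf : Continuous f) (n : ℕ) :
    Continuous (FKiter κ V n f) := by
  induction n with
  | zero => exact hf
  | succ n ih => exact hFeller _ ((Real.continuous_exp.comp hV).mul ih)

lemma aux_FK_mono (κ : X → Measure X) (hκprob : ∀ x, IsProbabilityMeasure (κ x))
    (V : X → ℝ) (hV : Continuous V) (f g : X → ℝ) (hf : Continuous f) (hg : Continuous g)
    (h : ∀ x, f x ≤ g x) (x : X) : FK κ V f x ≤ FK κ V g x := by
  have := hκprob x
  have hE : Continuous fun y => Real.exp (V y) := Real.continuous_exp.comp hV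
  exact integral_mono (aux_int _ _ (hE.mul hf)) (aux_int _ _ (hE.mul hg))
    fun y => mul_le_mul_of_nonneg_left (h y) (Real.exp_pos _).le

lemma aux_FK_smul (κ : X → Measure X) (V : X → ℝ) (f : X → ℝ) (c : ℝ) (x : X) :
    FK κ V (fun y => c * f y) x = c * FK κ V f x := by
  unfold FK
  rw [← integral_const_mul]
  congr 1; ext y; ring

lemma aux_FK_add (κ : X → Measure X) (hκprob : ∀ x, IsProbabilityMeasure (κ x))
    (V : X → ℝ) (hV : Continuous V) (f g : X → ℝ) (hf : Continuous f) (hg : Continuous g) (x : X) :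
    FK κ V (fun y => f y + g y) x = FK κ V f x + FK κ V g x := by
  have := hκprob x
  have hE : Continuous fun y => Real.exp (V y) := Real.continuous_exp.comp hV
  unfold FK
  have i1 : Integrable (fun y => Real.exp (V y) * f y) (κ x) := aux_int _ _ (hE.mul hf)
  have i2 : Integrable (fun y => Real.exp (V y) * g y) (κ x) := aux_int _ _ (hE.mul hg)
  rw [← integral_add i1 i2]
  congr 1; ext y; ring

lemma aux_FK_sum (κ : X → Measure X) (hκprob : ∀ x, IsProbabilityMeasure (κ x))
    (V : X → ℝ) (hV : Continuous V) (f : ℕ → X → ℝ) (hf : ∀ k, Continuous (f k)) (n : ℕ) (x : X) :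
    FK κ V (fun y => ∑ k ∈ Finset.range n, f k y) x = ∑ k ∈ Finset.range n, FK κ V (f k) x := by
  induction n with
  | zero => simp [FK]
  | succ n ih =>
    simp only [Finset.sum_range_succ]
    rw [aux_FK_add κ hκprob V hV _ _ (continuous_finsetSum _ fun k _ => hf k) (hf n), ih]

lemma aux_dom (κ : X → Measure X) (hκprob : ∀ x, IsProbabilityMeasure (κ x))
    (hFeller : ∀ f : X → ℝ, Continuous f → Continuous fun x => ∫ y, f y ∂(κ x))
    (V : X → ℝ) (hV : Continuous V) (h : X → ℝ) (hh : Continuous h) (c : ℝ)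
    (hc : ∀ x, |h x| ≤ c) (n : ℕ) : ∀ x, |FKiter κ V n h x| ≤ c * FKiter κ V n 1 x := by
  have h1 : Continuous (1 : X → ℝ) := continuous_const
  induction n with
  | zero => intro x; simpa [FKiter] using hc x
  | succ n ih =>
    intro x
    have cQ := aux_cont κ hFeller V hV h hh n
    have c1 := aux_cont κ hFeller V hV 1 h1 n
    rw [abs_le]
    show -(c * FK κ V (FKiter κ V n 1) x) ≤ FK κ V (FKiter κ V n h) x ∧
      FK κ V (FKiter κ V n h) x ≤ c * FK κ V (FKiter κ V n 1) x
    rw [← neg_mul, ← aux_FK_smul, ← aux_FK_smul]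
    constructor
    · refine aux_FK_mono κ hκprob V hV _ _ (continuous_const.mul c1) cQ (fun y => ?_) x
      have := (abs_le.1 (ih y)).1
      show -c * FKiter κ V n 1 y ≤ _
      linarith
    · refine aux_FK_mono κ hκprob V hV _ _ cQ (continuous_const.mul c1) (fun y => ?_) x
      exact (abs_le.1 (ih y)).2

lemma aux_iter_add (κ : X → Measure X) (V : X → ℝ) (f : X → ℝ) (m k : ℕ) :
    FKiter κ V (m + k) f = FKiter κ V m (FKiter κ V k f) := by
  induction m with
  | zero => simp [FKiter]
  | succ m ih => rw [Nat.succ_add]; simp only [FKiter]; rw [ih]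

lemma aux_lower (κ : X → Measure X) (hκprob : ∀ x, IsProbabilityMeasure (κ x))
    (hFeller : ∀ f : X → ℝ, Continuous f → Continuous fun x => ∫ y, f y ∂(κ x))
    (V : X → ℝ) (hV : Continuous V) (e : ℝ) (he : 0 ≤ e)
    (hVe : ∀ x, e ≤ Real.exp (V x)) (n : ℕ) : ∀ x, e ^ n ≤ FKiter κ V n 1 x := by
  have h1 : Continuous (1 : X → ℝ) := continuous_const
  induction n with
  | zero => intro x; simp [FKiter]
  | succ n ih =>
    intro x
    have := hκprob x
    have c1 := aux_cont κ hFeller V hV 1 h1 n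
    have hE : Continuous fun y => Real.exp (V y) := Real.continuous_exp.comp hV
    have : ∫ _y, e ^ (n+1) ∂(κ x) ≤ FK κ V (FKiter κ V n 1) x := by
      refine integral_mono (integrable_const _) (aux_int _ _ (hE.mul c1)) fun y => ?_
      show e ^ (n+1) ≤ Real.exp (V y) * FKiter κ V n 1 y
      rw [pow_succ']
      exact mul_le_mul (hVe y) (ih y) (by positivity) (Real.exp_pos _).le
    have h2 : ∫ _y, e ^ (n+1) ∂(κ x) = e ^ (n+1) := by simp
    rw [h2] at this
    exact this

lemma aux_step (κ : X → Measure X)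
    {Ω₀ : Type*} [MeasurableSpace Ω₀] (P₀ : Measure Ω₀) [IsProbabilityMeasure P₀]
    (q : ℝ) (hq0 : 0 ≤ q) (hq1 : q < 1) (C : ℝ) (hC : 0 < C)
    (V : X → ℝ) (KV : ℝ≥0) (hV : LipschitzWith KV V) (E : ℝ) (hE : ∀ x, Real.exp (V x) ≤ E)
    (h G : X → ℝ) (hh : Continuous h) (hG : Continuous G) (hG0 : ∀ x, 0 ≤ G x) (c : ℝ)
    (hc : ∀ x, |h x| ≤ c) (hhG : ∀ x x', |h x - h x'| ≤ G x * dist x x') (x x' : X)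
    (R R' : Ω₀ → X) (hR : Measurable R) (hR' : Measurable R')
    (hRlaw : Measure.map R P₀ = κ x) (hR'law : Measure.map R' P₀ = κ x')
    (hcouple : P₀ {ω | q * dist x x' < dist (R ω) (R' ω)} ≤ ENNReal.ofReal (C * dist x x')) :
    |FK κ V h x - FK κ V h x'| ≤ (E * (KV + 2 * C) * c + q * FK κ V G x) * dist x x' := by
  have hVc := hV.continuous
  have hEc : Continuous fun y => Real.exp (V y) := Real.continuous_exp.comp hVc
  have hmap : ∀ (S : Ω₀ → X) (g : X → ℝ), Measurable S → Continuous g →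
      Integrable (fun ω => g (S ω)) P₀ := by
    intro S g hS hg
    have := Measure.isProbabilityMeasure_map (μ := P₀) hS.aemeasurable
    exact (aux_int (P₀.map S) g hg).comp_measurable hS
  have hint : ∀ (g : X → ℝ), Continuous g → FK κ V g x = ∫ ω, Real.exp (V (R ω)) * g (R ω) ∂P₀ := by
    intro g hg
    unfold FK
    rw [← hRlaw]
    exact integral_map hR.aemeasurable (hEc.mul hg).aestronglyMeasurable
  have hint' : FK κ V h x' = ∫ ω, Real.exp (V (R' ω)) * h (R' ω) ∂P₀ := by
    unfold FK
    rw [← hR'law]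
    exact integral_map hR'.aemeasurable (hEc.mul hh).aestronglyMeasurable
  set d := dist x x' with hd
  have hd0 : 0 ≤ d := dist_nonneg
  set bad : Set Ω₀ := {ω | q * d < dist (R ω) (R' ω)} with hbad
  have hbm : MeasurableSet bad := measurableSet_lt measurable_const (hR.dist hR')
  have hc0 : 0 ≤ c := (abs_nonneg _).trans (hc x)
  have hE0 : 0 ≤ E := (Real.exp_pos _).le.trans (hE x)
  have hi1 : Integrable (fun ω => Real.exp (V (R ω)) * h (R ω)) P₀ := hmap R _ hR (hEc.mul hh)
  have hi2 : Integrable (fun ω => Real.exp (V (R' ω)) * h (R' ω)) P₀ := hmap R' _ hR' (hEc.mul hh)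
  have hi3 : Integrable (fun ω => Real.exp (V (R ω)) * G (R ω)) P₀ := hmap R _ hR (hEc.mul hG)
  have hib : Integrable (bad.indicator fun _ => 2 * E * c) P₀ :=
    (integrable_const _).indicator hbm
  have hbr : P₀.real bad ≤ C * d := by
    rw [Measure.real]
    exact ENNReal.toReal_le_of_le_ofReal (by positivity) hcouple
  have hpt : ∀ ω, |Real.exp (V (R ω)) * h (R ω) - Real.exp (V (R' ω)) * h (R' ω)| ≤
      (q * d * (Real.exp (V (R ω)) * G (R ω)) + E * KV * c * d)
        + bad.indicator (fun _ => 2 * E * c) ω := by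
    intro ω
    have he1 := (Real.exp_pos (V (R ω)))
    have he2 := (Real.exp_pos (V (R' ω)))
    have hg := hG0 (R ω)
    by_cases hω : ω ∈ bad
    · rw [Set.indicator_of_mem hω]
      have h1 : |Real.exp (V (R ω)) * h (R ω)| ≤ E * c := by
        rw [abs_mul, abs_of_pos he1]
        exact mul_le_mul (hE _) (hc _) (abs_nonneg _) hE0
      have h2 : |Real.exp (V (R' ω)) * h (R' ω)| ≤ E * c := by
        rw [abs_mul, abs_of_pos he2]
        exact mul_le_mul (hE _) (hc _) (abs_nonneg _) hE0
      have h3 := abs_sub (Real.exp (V (R ω)) * h (R ω)) (Real.exp (V (R' ω)) * h (R' ω))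
      have h4 : 0 ≤ q * d * (Real.exp (V (R ω)) * G (R ω)) + E * KV * c * d := by positivity
      linarith
    · rw [Set.indicator_of_notMem hω]
      have hle : dist (R ω) (R' ω) ≤ q * d := not_lt.1 hω
      have h1 : |Real.exp (V (R ω)) * (h (R ω) - h (R' ω))|
          ≤ q * d * (Real.exp (V (R ω)) * G (R ω)) := by
        rw [abs_mul, abs_of_pos he1]
        calc _ ≤ Real.exp (V (R ω)) * (G (R ω) * dist (R ω) (R' ω)) := by
              gcongr; exact hhG _ _
          _ ≤ Real.exp (V (R ω)) * (G (R ω) * (q * d)) := by gcongr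
          _ = _ := by ring
      have h2 : |(Real.exp (V (R ω)) - Real.exp (V (R' ω))) * h (R' ω)| ≤ E * KV * c * d := by
        rw [abs_mul]
        have hVd : |V (R ω) - V (R' ω)| ≤ KV * d := by
          calc _ ≤ KV * dist (R ω) (R' ω) := hV.dist_le_mul _ _
            _ ≤ KV * (q * d) := by gcongr
            _ ≤ KV * (1 * d) := by gcongr
            _ = _ := by ring
        calc _ ≤ (E * |V (R ω) - V (R' ω)|) * c :=
              mul_le_mul (aux_exp_diff E _ _ (hE _) (hE _)) (hc _) (abs_nonneg _) (by positivity)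
          _ ≤ (E * (KV * d)) * c := by gcongr
          _ = _ := by ring
      have h3 : Real.exp (V (R ω)) * h (R ω) - Real.exp (V (R' ω)) * h (R' ω) =
        Real.exp (V (R ω)) * (h (R ω) - h (R' ω)) +
          (Real.exp (V (R ω)) - Real.exp (V (R' ω))) * h (R' ω) := by ring
      rw [h3]
      have h4 := abs_add_le (Real.exp (V (R ω)) * (h (R ω) - h (R' ω)))
        ((Real.exp (V (R ω)) - Real.exp (V (R' ω))) * h (R' ω))
      linarith
  rw [hint h hh, hint', hint G hG, ← integral_sub hi1 hi2]
  have hj1 : Integrable (fun ω => q * d * (Real.exp (V (R ω)) * G (R ω))) P₀ := hi3.const_mul _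
  have hj2 : Integrable (fun ω => q * d * (Real.exp (V (R ω)) * G (R ω)) + E * KV * c * d) P₀ :=
    hj1.add (integrable_const _)
  calc _ ≤ ∫ ω, |Real.exp (V (R ω)) * h (R ω) - Real.exp (V (R' ω)) * h (R' ω)| ∂P₀ :=
        abs_integral_le_integral_abs
    _ ≤ ∫ ω, ((q * d * (Real.exp (V (R ω)) * G (R ω)) + E * KV * c * d)
        + bad.indicator (fun _ => 2 * E * c) ω) ∂P₀ :=
        integral_mono (hi1.sub hi2).abs (hj2.add hib) hpt
    _ = q * d * (∫ ω, Real.exp (V (R ω)) * G (R ω) ∂P₀) + E * KV * c * d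
        + P₀.real bad * (2 * E * c) := by
        rw [integral_add hj2 hib, integral_add hj1 (integrable_const _), integral_const_mul,
          integral_indicator_const _ hbm]
        simp
    _ ≤ q * d * (∫ ω, Real.exp (V (R ω)) * G (R ω) ∂P₀) + E * KV * c * d
        + (C * d) * (2 * E * c) := by gcongr
    _ = _ := by ring

end FKsec

lemma aux_sum (b : ℕ → ℝ) (hb : ∀ n, 0 ≤ b n) (hsub : ∀ m k, b (m + k) ≤ b m * b k)
    (m : ℕ) (hm : b m < 1) : ∃ S, 0 ≤ S ∧ ∀ n, ∑ k ∈ Finset.range n, b k ≤ S := by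
  have h1 : 0 < 1 - b m := by linarith
  refine ⟨(∑ k ∈ Finset.range m, b k) / (1 - b m),
    div_nonneg (Finset.sum_nonneg fun _ _ => hb _) h1.le, fun n => ?_⟩
  rw [le_div_iff₀ h1]
  have h2 : ∑ k ∈ Finset.range n, b k ≤ ∑ k ∈ Finset.range (m + n), b k :=
    Finset.sum_le_sum_of_subset_of_nonneg (Finset.range_mono (by omega)) fun _ _ _ => hb _
  rw [Finset.sum_range_add] at h2
  have h3 : ∑ k ∈ Finset.range n, b (m + k) ≤ b m * ∑ k ∈ Finset.range n, b k := by
    rw [Finset.mul_sum]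
    exact Finset.sum_le_sum fun k _ => hsub m k
  linarith

/-- The Lipschitz constant of the Feynman–Kac semigroup is controlled by
the rescaled supremum norms: `Lip(Q_n^V f) ≤ C_V·‖f‖_L·λ₁ⁿ·M_n` where
`λ₁ = inf_{n≥1} ‖Q_n^V 1‖_∞^{1/n}` and `M_n = max_{0≤k≤n} λ₁^{−k}·‖Q_k^V 1‖_∞`. -/
theorem FK_lipschitz_vs_rescaled_sup
    {X : Type*} [MetricSpace X] [CompactSpace X] [MeasurableSpace X] [BorelSpace X]
    (κ : X → Measure X) (hκmeas : Measurable κ)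
    (hκprob : ∀ x, IsProbabilityMeasure (κ x))
    (hFeller : ∀ f : X → ℝ, Continuous f → Continuous fun x => ∫ y, f y ∂(κ x))
    -- hypothesis (C): coupling
    {Ω₀ : Type*} [MeasurableSpace Ω₀] (P₀ : Measure Ω₀) [IsProbabilityMeasure P₀]
    (q : ℝ) (hq0 : 0 ≤ q) (hq1 : q < 1) (C : ℝ) (hC : 0 < C)
    (R R' : X → X → Ω₀ → X)
    (hRmeas : Measurable fun p : (X × X) × Ω₀ => R p.1.1 p.1.2 p.2)
    (hR'meas : Measurable fun p : (X × X) × Ω₀ => R' p.1.1 p.1.2 p.2)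
    (hRlaw : ∀ x x' : X, Measure.map (R x x') P₀ = κ x)
    (hR'law : ∀ x x' : X, Measure.map (R' x x') P₀ = κ x')
    (hcouple : ∀ x x' : X,
      P₀ {ω | q * dist x x' < dist (R x x' ω) (R' x x' ω)} ≤ ENNReal.ofReal (C * dist x x'))
    (V : X → ℝ) (KV : ℝ≥0) (hV : LipschitzWith KV V)
    (lam1 : ℝ)
    (hlam1 : lam1 = ⨅ n : {n : ℕ // 1 ≤ n}, supNorm (FKiter κ V (n : ℕ) 1) ^ (((n : ℕ) : ℝ)⁻¹))
    (M : ℕ → ℝ)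
    (hM : ∀ n : ℕ, M n = ⨆ k : Fin (n + 1), lam1⁻¹ ^ (k : ℕ) * supNorm (FKiter κ V (k : ℕ) 1)) :
    ∃ CV : ℝ, ∀ (f : X → ℝ) (Kf : ℝ≥0), LipschitzWith Kf f →
      ∀ (n : ℕ) (x x' : X),
        |FKiter κ V n f x - FKiter κ V n f x'|
          ≤ CV * lipNorm f * lam1 ^ n * M n * dist x x' := by
  rcases isEmpty_or_nonempty X with hX | hX
  · exact ⟨0, fun f Kf hf n x => (hX.false x).elim⟩
  have hVc := hV.continuous
  have hEc : Continuous fun y => Real.exp (V y) := Real.continuous_exp.comp hVc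
  have h1c : Continuous (1 : X → ℝ) := continuous_const
  obtain ⟨xm, hxm⟩ := (isCompact_univ (X := X)).exists_isMinOn Set.univ_nonempty hEc.continuousOn
  obtain ⟨xM, hxM⟩ := (isCompact_univ (X := X)).exists_isMaxOn Set.univ_nonempty hEc.continuousOn
  set e := Real.exp (V xm) with he
  set E := Real.exp (V xM) with hE
  have hVe : ∀ x, e ≤ Real.exp (V x) := fun x => hxm.2 (Set.mem_univ x)
  have hVE : ∀ x, Real.exp (V x) ≤ E := fun x => hxM.2 (Set.mem_univ x)
  have he0 : 0 < e := Real.exp_pos _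
  have hE0 : 0 < E := Real.exp_pos _
  have hQc : ∀ n, Continuous (FKiter κ V n 1) := aux_cont κ hFeller V hVc 1 h1c
  have hlow := aux_lower κ hκprob hFeller V hVc e he0.le hVe
  have hQ0 : ∀ n x, 0 ≤ FKiter κ V n 1 x := fun n x => (pow_pos he0 n).le.trans (hlow n x)
  set a : ℕ → ℝ := fun n => supNorm (FKiter κ V n 1) with ha
  have ha0 : ∀ n, 0 ≤ a n := fun n => aux_supNorm_nonneg _
  have hQa : ∀ n x, FKiter κ V n 1 x ≤ a n := fun n x =>
    (le_abs_self _).trans (aux_abs_le_supNorm _ (hQc n) x)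
  have hae : ∀ n, e ^ n ≤ a n := fun n => (hlow n hX.some).trans (hQa n _)
  have hasub : ∀ m k, a (m + k) ≤ a m * a k := by
    intro m k
    refine ciSup_le fun x => ?_
    rw [aux_iter_add]
    refine (aux_dom κ hκprob hFeller V hVc _ (hQc k) (a k)
      (aux_abs_le_supNorm _ (hQc k)) m x).trans ?_
    rw [mul_comm]
    exact mul_le_mul_of_nonneg_right (hQa m x) (ha0 k)
  have hne : Nonempty {n : ℕ // 1 ≤ n} := ⟨⟨1, le_rfl⟩⟩
  have hl0 : 0 < lam1 := by
    refine he0.trans_le ?_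
    rw [hlam1]
    refine le_ciInf fun n => ?_
    have hn : (n : ℕ) ≠ 0 := by have := n.2; omega
    calc e = (e ^ (n : ℕ)) ^ (((n : ℕ) : ℝ)⁻¹) := (Real.pow_rpow_inv_natCast he0.le hn).symm
      _ ≤ _ := Real.rpow_le_rpow (by positivity) (hae n) (by positivity)
  set b : ℕ → ℝ := fun k => q ^ k * (lam1⁻¹ ^ k * a k) with hb
  have hb0 : ∀ k, 0 ≤ b k := fun k => by have := ha0 k; positivity
  have hbsub : ∀ m k, b (m + k) ≤ b m * b k := by
    intro m k
    calc b (m + k) = (q ^ (m+k) * lam1⁻¹ ^ (m+k)) * a (m+k) := by simp only [hb]; ring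
      _ ≤ (q ^ (m+k) * lam1⁻¹ ^ (m+k)) * (a m * a k) := by gcongr; exact hasub m k
      _ = b m * b k := by simp only [hb, pow_add]; ring
  have hbm : ∃ m, b m < 1 := by
    rcases hq0.eq_or_lt with hq | hq
    · exact ⟨1, by simp [hb, ← hq]⟩
    · have hlt : lam1 < lam1 / q := by
        rw [lt_div_iff₀ hq]; nlinarith
      obtain ⟨n, hn⟩ := exists_lt_of_ciInf_lt (hlam1.symm.trans_lt hlt :
        (⨅ n : {n : ℕ // 1 ≤ n}, supNorm (FKiter κ V (n : ℕ) 1) ^ (((n : ℕ) : ℝ)⁻¹)) < lam1 / q)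
      have hn0 : (n : ℕ) ≠ 0 := by have := n.2; omega
      refine ⟨n, ?_⟩
      have h2 : a n < (lam1 / q) ^ (n : ℕ) := by
        calc a n = (a n ^ (((n : ℕ) : ℝ)⁻¹)) ^ (n : ℕ) :=
              (Real.rpow_inv_natCast_pow (ha0 n) hn0).symm
          _ < _ := pow_lt_pow_left₀ hn (Real.rpow_nonneg (ha0 n) _) hn0
      calc b n < q ^ (n:ℕ) * (lam1⁻¹ ^ (n:ℕ) * (lam1 / q) ^ (n : ℕ)) := by
            simp only [hb]; gcongr
        _ = 1 := by
            rw [← mul_pow, ← mul_pow]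
            have : q * (lam1⁻¹ * (lam1 / q)) = 1 := by field_simp
            rw [this, one_pow]
  obtain ⟨m, hm⟩ := hbm
  obtain ⟨S, hS0, hS⟩ := aux_sum b hb0 hbsub m hm
  have hMk : ∀ n k, k ≤ n → a k ≤ lam1 ^ k * M n := by
    intro n k hk
    have h1 : lam1⁻¹ ^ k * a k ≤ M n := by
      rw [hM]
      exact le_ciSup (f := fun k : Fin (n + 1) =>
        lam1⁻¹ ^ (k : ℕ) * supNorm (FKiter κ V (k : ℕ) 1)) (Set.finite_range _).bddAbove
        ⟨k, by omega⟩
    calc a k = lam1 ^ k * (lam1⁻¹ ^ k * a k) := by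
          rw [← mul_assoc, ← mul_pow, mul_inv_cancel₀ hl0.ne', one_pow, one_mul]
      _ ≤ _ := by gcongr
  have hM0 : ∀ n, 0 ≤ M n := by
    intro n
    have := hMk n 0 (Nat.zero_le _)
    have h2 := ha0 0
    simp only [pow_zero, one_mul] at this
    linarith
  set B := E * (KV + 2 * C) with hB
  have hB0 : 0 ≤ B := by positivity
  refine ⟨B * S / lam1 + 1, ?_⟩
  intro f Kf hf n x x'
  have hfc := hf.continuous
  set F := supNorm f with hF
  set L := lipConst f with hL
  have hF0 : 0 ≤ F := aux_supNorm_nonneg _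
  have hL0 : 0 ≤ L := aux_lipConst_nonneg _
  have hfQ : ∀ n x, |FKiter κ V n f x| ≤ F * a n := fun n x =>
    (aux_dom κ hκprob hFeller V hVc f hfc F (aux_abs_le_supNorm f hfc) n x).trans
      (mul_le_mul_of_nonneg_left (hQa n x) hF0)
  let G : ℕ → X → ℝ := fun n x =>
    (∑ k ∈ Finset.range n, (B * q ^ k * a (n - 1 - k) * F) * FKiter κ V k 1 x)
      + (q ^ n * L) * FKiter κ V n 1 x
  have hGc : ∀ n, Continuous (G n) := fun n =>
    (continuous_finsetSum _ fun k _ => continuous_const.mul (hQc k)).add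
      (continuous_const.mul (hQc n))
  have hG0 : ∀ n x, 0 ≤ G n x := by
    intro n x
    refine add_nonneg (Finset.sum_nonneg fun k _ => ?_) ?_
    · have := ha0 (n - 1 - k); have := hQ0 k x; positivity
    · have := hQ0 n x; positivity
  have hGs : ∀ n x, G (n + 1) x = B * (F * a n) + q * FK κ V (G n) x := by
    intro n x
    have e1 : FK κ V (G n) x =
        (∑ k ∈ Finset.range n, (B * q ^ k * a (n - 1 - k) * F) * FKiter κ V (k + 1) 1 x)
          + (q ^ n * L) * FKiter κ V (n + 1) 1 x := by
      simp only [G]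
      rw [aux_FK_add κ hκprob V hVc
        (fun y => ∑ k ∈ Finset.range n, (B * q ^ k * a (n - 1 - k) * F) * FKiter κ V k 1 y)
        (fun y => (q ^ n * L) * FKiter κ V n 1 y)
        (continuous_finsetSum _ fun k _ => continuous_const.mul (hQc k))
        (continuous_const.mul (hQc n)), aux_FK_sum κ hκprob V hVc
        (fun k y => (B * q ^ k * a (n - 1 - k) * F) * FKiter κ V k 1 y)
        (fun k => continuous_const.mul (hQc k)), aux_FK_smul]
      simp only [aux_FK_smul]
      rfl
    rw [e1]
    simp only [G]
    rw [Finset.sum_range_succ', mul_add, Finset.mul_sum]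
    have e2 : ∀ k ∈ Finset.range n, (B * q ^ (k+1) * a (n + 1 - 1 - (k+1)) * F)
        * FKiter κ V (k+1) 1 x =
        q * ((B * q ^ k * a (n - 1 - k) * F) * FKiter κ V (k + 1) 1 x) := by
      intro k _
      have : n + 1 - 1 - (k + 1) = n - 1 - k := by omega
      rw [this]; ring
    rw [Finset.sum_congr rfl e2]
    have e3 : FKiter κ V 0 1 x = 1 := rfl
    rw [e3]
    simp only [Nat.add_sub_cancel, Nat.sub_zero]
    ring
  have hmain : ∀ n x x', |FKiter κ V n f x - FKiter κ V n f x'| ≤ G n x * dist x x' := by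
    intro n
    induction n with
    | zero =>
      intro x x'
      simpa [G, FKiter] using aux_lipConst f Kf hf x x'
    | succ n ih =>
      intro x x'
      rw [hGs]
      exact aux_step κ P₀ q hq0 hq1 C hC V KV hV E hVE (FKiter κ V n f) (G n)
        (aux_cont κ hFeller V hVc f hfc n) (hGc n) (hG0 n) (F * a n) (hfQ n) ih x x'
        (R x x') (R' x x')
        (hRmeas.comp (measurable_prodMk_left (x := (x, x'))))
        (hR'meas.comp (measurable_prodMk_left (x := (x, x'))))
        (hRlaw x x') (hR'law x x') (hcouple x x')
  refine (hmain n x x').trans (mul_le_mul_of_nonneg_right ?_ dist_nonneg)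
  have hMn := hM0 n
  have hterm : ∀ k ∈ Finset.range n, (B * q ^ k * a (n - 1 - k) * F) * FKiter κ V k 1 x ≤
      (B * F * lam1 ^ n / lam1 * M n) * b k := by
    intro k hk
    have hkn : k < n := Finset.mem_range.1 hk
    have h1 := hMk n (n - 1 - k) (by omega)
    have h2 := ha0 (n - 1 - k)
    have h3 := hQ0 k x
    have h4 : lam1 ^ n = lam1 * lam1 ^ k * lam1 ^ (n - 1 - k) := by
      rw [mul_assoc, ← pow_add, ← pow_succ']; congr 1; omega
    have h5 := ha0 k
    calc _ ≤ (B * q ^ k * (lam1 ^ (n - 1 - k) * M n) * F) * a k := by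
          gcongr
          exact hQa k x
      _ = _ := by
          simp only [hb]
          rw [h4, inv_pow]
          field_simp
  have hsum := Finset.sum_le_sum hterm
  rw [← Finset.mul_sum] at hsum
  have hsum2 : (B * F * lam1 ^ n / lam1 * M n) * ∑ k ∈ Finset.range n, b k ≤
      (B * F * lam1 ^ n / lam1 * M n) * S := by gcongr; exact hS n
  have hlast : (q ^ n * L) * FKiter κ V n 1 x ≤ L * (lam1 ^ n * M n) := by
    have h3 := hQ0 n x
    calc _ ≤ (1 * L) * FKiter κ V n 1 x := by
          gcongr; exact pow_le_one₀ hq0 hq1.le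
      _ ≤ (1 * L) * (lam1 ^ n * M n) := by
          gcongr; exact (hQa n x).trans (hMk n n le_rfl)
      _ = _ := by ring
  have hfin : (B * F * lam1 ^ n / lam1 * M n) * S + L * (lam1 ^ n * M n) ≤
      (B * S / lam1 + 1) * (F + L) * lam1 ^ n * M n := by
    have : 0 ≤ (B * S / lam1) * L * lam1 ^ n * M n := by positivity
    have : 0 ≤ F * lam1 ^ n * M n := by positivity
    have e : (B * S / lam1 + 1) * (F + L) * lam1 ^ n * M n =
      (B * F * lam1 ^ n / lam1 * M n) * S + L * (lam1 ^ n * M n)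
       + (B * S / lam1) * L * lam1 ^ n * M n + F * lam1 ^ n * M n := by ring
    linarith
  show _ ≤ (B * S / lam1 + 1) * (F + L) * lam1 ^ n * M n
  simp only [G]
  linarith
end

section
/- Uniform Feller property of normalized Feynman–Kac averages: Assume hypotheses (I) and (C), let V : X → ℝ be Lipschitz continuous, and let f : X → ℝ be Lipschitz continuous with f(x) > 0 for all x ∈ X. Then the family of functions {Q_n^V f / ‖Q_n^V f‖_∞ : n ∈ ℕ} is uniformly equicontinuous: for every ε > 0 there exists δ > 0 such that for all n ∈ ℕ and all x, x' ∈ X with d(x,x') < δ, |Q_n^V f(x) − Q_n^V f(x')| < ε·‖Q_n^V f‖_∞. -/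
open MeasureTheory Filter Topology
open scoped ENNReal NNReal

set_option linter.unusedSectionVars false
section helpers
variable {X : Type*} [MetricSpace X] [CompactSpace X] [MeasurableSpace X] [BorelSpace X]

lemma abs_le_supNorm {g : X → ℝ} (hg : Continuous g) (x : X) : |g x| ≤ supNorm g := by
  have h : BddAbove (Set.range fun x => |g x|) := (isCompact_range hg.abs).bddAbove
  exact le_ciSup h x

lemma supNorm_le_of [Nonempty X] {g : X → ℝ} {c : ℝ} (h : ∀ x, |g x| ≤ c) : supNorm g ≤ c :=
  ciSup_le h

lemma cont_integrable {g : X → ℝ} (hg : Continuous g) (μ : Measure X) [IsProbabilityMeasure μ] :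
    Integrable g μ :=
  hg.integrable_of_hasCompactSupport (HasCompactSupport.of_compactSpace g)

lemma fkiter_cont {κ : X → Measure X}
    (hF : ∀ f : X → ℝ, Continuous f → Continuous fun x => ∫ y, f y ∂(κ x))
    {V : X → ℝ} (hV : Continuous V) (n : ℕ) {g : X → ℝ} (hg : Continuous g) :
    Continuous (FKiter κ V n g) := by
  induction n with
  | zero => exact hg
  | succ n ih => exact hF _ ((Real.continuous_exp.comp hV).mul ih)

lemma fkiter_add (κ : X → Measure X) (V : X → ℝ) (m n : ℕ) (g : X → ℝ) :
    FKiter κ V (m + n) g = FKiter κ V m (FKiter κ V n g) := by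
  induction m with
  | zero => simp [FKiter]
  | succ m ih => rw [Nat.succ_add]; simp only [FKiter, ih]

lemma fkiter_smul (κ : X → Measure X) (V : X → ℝ) (n : ℕ) (c : ℝ) (g : X → ℝ) :
    FKiter κ V n (fun x => c * g x) = fun x => c * FKiter κ V n g x := by
  induction n with
  | zero => simp [FKiter]
  | succ n ih =>
    simp only [FKiter, ih]
    funext x
    simp only [FK]
    rw [← integral_const_mul]
    congr 1; funext y; ring

lemma fkiter_mono {κ : X → Measure X} (hp : ∀ x, IsProbabilityMeasure (κ x))
    (hF : ∀ f : X → ℝ, Continuous f → Continuous fun x => ∫ y, f y ∂(κ x))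
    {V : X → ℝ} (hV : Continuous V) (n : ℕ) {g h : X → ℝ} (hg : Continuous g) (hh : Continuous h)
    (hgh : ∀ x, g x ≤ h x) (x : X) :
    FKiter κ V n g x ≤ FKiter κ V n h x := by
  induction n generalizing x with
  | zero => exact hgh x
  | succ n ih =>
    have := hp x
    simp only [FKiter, FK]
    refine integral_mono (cont_integrable ((Real.continuous_exp.comp hV).mul (fkiter_cont hF hV n hg)) _)
      (cont_integrable ((Real.continuous_exp.comp hV).mul (fkiter_cont hF hV n hh)) _) ?_
    intro y
    exact mul_le_mul_of_nonneg_left (ih y) (Real.exp_pos _).le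

lemma fkiter_sum {κ : X → Measure X} (hp : ∀ x, IsProbabilityMeasure (κ x))
    (hF : ∀ f : X → ℝ, Continuous f → Continuous fun x => ∫ y, f y ∂(κ x))
    {V : X → ℝ} (hV : Continuous V) (n : ℕ) {g h : X → ℝ} (hg : Continuous g) (hh : Continuous h) :
    FKiter κ V n (fun x => g x + h x) = fun x => FKiter κ V n g x + FKiter κ V n h x := by
  induction n with
  | zero => rfl
  | succ n ih =>
    funext x
    have := hp x
    simp only [FKiter, FK, ih]
    have i1 : Integrable (fun y => Real.exp (V y) * FKiter κ V n g y) (κ x) :=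
      cont_integrable ((Real.continuous_exp.comp hV).mul (fkiter_cont hF hV n hg)) _
    have i2 : Integrable (fun y => Real.exp (V y) * FKiter κ V n h y) (κ x) :=
      cont_integrable ((Real.continuous_exp.comp hV).mul (fkiter_cont hF hV n hh)) _
    rw [← integral_add i1 i2]
    congr 1; funext y; ring

lemma fkiter_const (κ : X → Measure X) (V : X → ℝ) (n : ℕ) (c : ℝ) (x : X) :
    FKiter κ V n (fun _ => c) x = c * FKiter κ V n (fun _ => 1) x := by
  have := congrFun (fkiter_smul κ V n c (fun _ => 1)) x
  simpa using this

lemma fkiter_nonneg {κ : X → Measure X} (V : X → ℝ) (n : ℕ) {g : X → ℝ}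
    (hg : ∀ x, 0 ≤ g x) (x : X) : 0 ≤ FKiter κ V n g x := by
  induction n generalizing x with
  | zero => exact hg x
  | succ n ih => exact integral_nonneg fun y => mul_nonneg (Real.exp_pos _).le (ih y)

/-- iterated lower bound by kernel iterates -/
lemma fkiter_ge_kIter {κ : X → Measure X} (hm : Measurable κ) (hp : ∀ x, IsProbabilityMeasure (κ x))
    (hF : ∀ f : X → ℝ, Continuous f → Continuous fun x => ∫ y, f y ∂(κ x))
    {V : X → ℝ} (hV : Continuous V) {B : ℝ} (hB : ∀ x, |V x| ≤ B) (n : ℕ) {g : X → ℝ}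
    (hg : Continuous g) (hg0 : ∀ x, 0 ≤ g x) (x : X) :
    ENNReal.ofReal (Real.exp (-B) ^ n) * ∫⁻ y, ENNReal.ofReal (g y) ∂(kIter κ n x)
      ≤ ENNReal.ofReal (FKiter κ V n g x) := by
  induction n generalizing g x with
  | zero =>
    simp only [kIter, FKiter]
    rw [lintegral_dirac' _ (hg.measurable.ennreal_ofReal)]
    simp
  | succ n ih =>
    have hc := hF g hg
    have h1 := ih hc (fun y => integral_nonneg hg0) x
    have e1 : ∫⁻ y, ENNReal.ofReal (g y) ∂(kIter κ (n+1) x)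
        = ∫⁻ y, ENNReal.ofReal (∫ z, g z ∂(κ y)) ∂(kIter κ n x) := by
      simp only [kIter]
      rw [Measure.lintegral_bind hm.aemeasurable hg.measurable.ennreal_ofReal.aemeasurable]
      congr 1; funext y
      have := hp y
      rw [ofReal_integral_eq_lintegral_ofReal (cont_integrable hg _)
        (Filter.Eventually.of_forall hg0)]
    have h2 : Real.exp (-B) * FKiter κ V n (fun y => ∫ z, g z ∂(κ y)) x ≤ FKiter κ V (n+1) g x := by
      rw [fkiter_add κ V n 1 g, ← congrFun (fkiter_smul κ V n _ _) x]
      refine fkiter_mono hp hF hV n (continuous_const.mul hc) (fkiter_cont hF hV 1 hg) ?_ x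
      intro y
      have := hp y
      change Real.exp (-B) * ∫ z, g z ∂(κ y) ≤ ∫ z, Real.exp (V z) * g z ∂(κ y)
      rw [← integral_const_mul]
      refine integral_mono ((cont_integrable hg _).const_mul _)
        (cont_integrable ((Real.continuous_exp.comp hV).mul hg) _) ?_
      intro z
      refine mul_le_mul_of_nonneg_right ?_ (hg0 z)
      exact Real.exp_le_exp.2 (by linarith [neg_abs_le (V z), hB z])
    rw [e1, pow_succ', ENNReal.ofReal_mul (Real.exp_pos _).le, mul_assoc]
    refine le_trans (mul_le_mul_right h1 _) ?_
    rw [← ENNReal.ofReal_mul (Real.exp_pos _).le]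
    exact ENNReal.ofReal_le_ofReal h2

lemma one_step {κ : X → Measure X} (hp : ∀ x, IsProbabilityMeasure (κ x))
    {Ω₀ : Type*} [MeasurableSpace Ω₀] (P₀ : Measure Ω₀) [IsProbabilityMeasure P₀]
    (q : ℝ) (hq0 : 0 ≤ q) (C : ℝ) (hC : 0 < C)
    (R R' : X → X → Ω₀ → X)
    (hRmeas : Measurable fun p : (X × X) × Ω₀ => R p.1.1 p.1.2 p.2)
    (hR'meas : Measurable fun p : (X × X) × Ω₀ => R' p.1.1 p.1.2 p.2)
    (hRlaw : ∀ x x' : X, Measure.map (R x x') P₀ = κ x)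
    (hR'law : ∀ x x' : X, Measure.map (R' x x') P₀ = κ x')
    (hcouple : ∀ x x' : X,
      P₀ {ω | q * dist x x' < dist (R x x' ω) (R' x x' ω)} ≤ ENNReal.ofReal (C * dist x x'))
    (V : X → ℝ) (KV : ℝ≥0) (hV : LipschitzWith KV V) {B : ℝ} (hB : ∀ x, |V x| ≤ B)
    {g D : X → ℝ} (hg : Continuous g) (hD : Continuous D) (hD0 : ∀ x, 0 ≤ D x) {M : ℝ}
    (hM : ∀ x, |g x| ≤ M) (hgD : ∀ x x', |g x - g x'| ≤ dist x x' * D x) (x x' : X) :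
    |FK κ V g x - FK κ V g x'| ≤
      dist x x' * (q * FK κ V D x + Real.exp B * (KV * q + 2 * C) * M) := by
  have hM0 : 0 ≤ M := le_trans (abs_nonneg _) (hM x)
  have hVc := hV.continuous
  have hE : Continuous fun y => Real.exp (V y) := Real.continuous_exp.comp hVc
  have mR : Measurable (R x x') := hRmeas.comp (measurable_prodMk_left (x := (x, x')))
  have mR' : Measurable (R' x x') := hR'meas.comp (measurable_prodMk_left (x := (x, x')))
  have key : ∀ h : X → ℝ, Continuous h → FK κ V h x = ∫ ω, Real.exp (V (R x x' ω)) * h (R x x' ω) ∂P₀ := by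
    intro h hh
    simp only [FK]
    rw [← hRlaw x x', integral_map mR.aemeasurable]
    exact (hE.mul hh).aestronglyMeasurable
  have key' : FK κ V g x' = ∫ ω, Real.exp (V (R' x x' ω)) * g (R' x x' ω) ∂P₀ := by
    simp only [FK]
    rw [← hR'law x x', integral_map mR'.aemeasurable]
    exact (hE.mul hg).aestronglyMeasurable
  have int1 : ∀ h : X → ℝ, Continuous h → Integrable (fun ω => Real.exp (V (R x x' ω)) * h (R x x' ω)) P₀ := by
    intro h hh
    have := hp x
    have h1 : Integrable (fun y => Real.exp (V y) * h y) (Measure.map (R x x') P₀) := by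
      rw [hRlaw]; exact cont_integrable (hE.mul hh) _
    exact h1.comp_measurable mR
  have int2 : Integrable (fun ω => Real.exp (V (R' x x' ω)) * g (R' x x' ω)) P₀ := by
    have := hp x'
    have h1 : Integrable (fun y => Real.exp (V y) * g y) (Measure.map (R' x x') P₀) := by
      rw [hR'law]; exact cont_integrable (hE.mul hg) _
    exact h1.comp_measurable mR'
  set S : Set Ω₀ := {ω | q * dist x x' < dist (R x x' ω) (R' x x' ω)} with hS
  have mS : MeasurableSet S := measurableSet_lt measurable_const (mR.dist mR')
  have hPS : P₀.real S ≤ C * dist x x' := by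
    have := hcouple x x'
    exact ENNReal.toReal_le_of_le_ofReal (by positivity) this
  rw [key g hg, key', ← integral_sub (int1 g hg) int2]
  have hexp : ∀ y, Real.exp (V y) ≤ Real.exp B := fun y =>
    Real.exp_le_exp.2 (le_trans (le_abs_self _) (hB y))
  have hlip : ∀ y z, |Real.exp (V y) - Real.exp (V z)| ≤ Real.exp B * (KV * dist y z) := by
    have aux : ∀ y z, Real.exp (V y) - Real.exp (V z) ≤ Real.exp B * (KV * dist y z) := by
      intro y z
      have h1 : Real.exp (V y) - Real.exp (V z) = Real.exp (V y) * (1 - Real.exp (V z - V y)) := by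
        rw [mul_sub, ← Real.exp_add]; simp
      have h2 := Real.add_one_le_exp (V z - V y)
      have h3 := hV.dist_le_mul y z
      rw [Real.dist_eq] at h3
      rw [h1]
      have h4 : 1 - Real.exp (V z - V y) ≤ KV * dist y z := by
        linarith [le_abs_self (V y - V z)]
      calc _ ≤ Real.exp (V y) * (KV * dist y z) := mul_le_mul_of_nonneg_left h4 (Real.exp_pos _).le
        _ ≤ _ := mul_le_mul_of_nonneg_right (hexp y) (by positivity)
    intro y z
    rw [abs_le]
    constructor
    · have := aux z y
      rw [dist_comm] at this; linarith
    · exact aux y z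
  have hbound : ∀ ω, ‖Real.exp (V (R x x' ω)) * g (R x x' ω) - Real.exp (V (R' x x' ω)) * g (R' x x' ω)‖
      ≤ (q * dist x x' * (Real.exp (V (R x x' ω)) * D (R x x' ω)) + Real.exp B * KV * q * dist x x' * M)
        + S.indicator (fun _ => 2 * Real.exp B * M) ω := by
    intro ω
    generalize hy : R x x' ω = y
    generalize hz : R' x x' ω = z
    rw [Real.norm_eq_abs]
    by_cases hω : ω ∈ S
    · rw [Set.indicator_of_mem hω]
      have h1 : |Real.exp (V y) * g y| ≤ Real.exp B * M := by
        rw [abs_mul, abs_of_pos (Real.exp_pos _)]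
        exact mul_le_mul (hexp y) (hM y) (abs_nonneg _) (Real.exp_pos _).le
      have h2 : |Real.exp (V z) * g z| ≤ Real.exp B * M := by
        rw [abs_mul, abs_of_pos (Real.exp_pos _)]
        exact mul_le_mul (hexp z) (hM z) (abs_nonneg _) (Real.exp_pos _).le
      have h3 := abs_sub (Real.exp (V y) * g y) (Real.exp (V z) * g z)
      have h4 := hD0 y
      have : 0 ≤ q * dist x x' * (Real.exp (V y) * D y) + Real.exp B * KV * q * dist x x' * M := by
        positivity
      linarith
    · rw [Set.indicator_of_notMem hω, add_zero]
      have hd : dist y z ≤ q * dist x x' := by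
        rw [← hy, ← hz]
        exact not_lt.1 hω
      have e : Real.exp (V y) * g y - Real.exp (V z) * g z
        = Real.exp (V y) * (g y - g z) + (Real.exp (V y) - Real.exp (V z)) * g z := by ring
      rw [e]
      refine (abs_add_le _ _).trans (add_le_add ?_ ?_)
      · rw [abs_mul, abs_of_pos (Real.exp_pos _)]
        calc _ ≤ Real.exp (V y) * (q * dist x x' * D y) := by
              refine mul_le_mul_of_nonneg_left ((hgD y z).trans ?_) (Real.exp_pos _).le
              exact mul_le_mul_of_nonneg_right hd (hD0 y)
          _ = _ := by ring
      · rw [abs_mul]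
        calc _ ≤ (Real.exp B * (KV * (q * dist x x'))) * M := by
              refine mul_le_mul ((hlip y z).trans ?_) (hM z) (abs_nonneg _) (by positivity)
              gcongr
          _ = _ := by ring
  have hI1 : Integrable (fun ω => q * dist x x' * (Real.exp (V (R x x' ω)) * D (R x x' ω))
      + Real.exp B * KV * q * dist x x' * M) P₀ :=
    ((int1 D hD).const_mul _).add (integrable_const _)
  have hI2 : Integrable (S.indicator (fun _ => 2 * Real.exp B * M)) P₀ :=
    (integrable_const _).indicator mS
  have := norm_integral_le_of_norm_le (hI1.add hI2) (Filter.Eventually.of_forall hbound)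
  rw [← Real.norm_eq_abs]
  refine this.trans ?_
  have e2 := integral_add hI1 hI2
  simp only [Pi.add_apply]
  rw [e2, integral_add ((int1 D hD).const_mul _) (integrable_const _), integral_const_mul,
    integral_const, integral_indicator_const _ mS, ← key D hD]
  simp only [probReal_univ, smul_eq_mul, one_mul]
  have h5 : P₀.real S * (2 * Real.exp B * M) ≤ C * dist x x' * (2 * Real.exp B * M) :=
    mul_le_mul_of_nonneg_right hPS (by positivity)
  linarith

end helpers

lemma growth_aux (a : ℕ → ℝ) (hpos : ∀ n, 0 < a n) (h0 : a 0 = 1)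
    (hsub : ∀ m n, a (m + n) ≤ a m * a n) (B : ℝ) (hlow : ∀ n, Real.exp (-B) ^ n ≤ a n) :
    ∃ r : ℝ, 0 < r ∧ (∀ n, r ^ n ≤ a n) ∧
      (∀ θ : ℝ, 0 < θ → θ < 1 → ∃ C : ℝ, 0 < C ∧ ∀ k, a k ≤ C * (r / θ) ^ k) ∧
      (∀ (s : ℕ) (β : ℝ), 0 < β → (∀ j : ℕ, β ^ j ≤ a (j * s)) → β ≤ r ^ s) := by
  have hu : Subadditive (fun n => Real.log (a n)) := by
    intro m n
    have := Real.log_le_log (hpos _) (hsub m n)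
    rwa [Real.log_mul (hpos m).ne' (hpos n).ne'] at this
  have hb : BddBelow (Set.range fun n : ℕ => Real.log (a n) / n) := by
    refine ⟨min (-B) 0, ?_⟩
    rintro _ ⟨n, rfl⟩
    rcases Nat.eq_zero_or_pos n with rfl | hn
    · simp
    · have hn' : (0 : ℝ) < n := by exact_mod_cast hn
      refine (min_le_left _ _).trans ?_
      simp only
      rw [le_div_iff₀ hn']
      have := Real.log_le_log (by positivity) (hlow n)
      rw [Real.log_pow, Real.log_exp] at this
      linarith
  set l := hu.lim with hl
  have ht : Tendsto (fun n : ℕ => Real.log (a n) / n) atTop (𝓝 l) := hu.tendsto_lim hb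
  refine ⟨Real.exp l, Real.exp_pos _, ?_, ?_, ?_⟩
  · intro n
    rcases Nat.eq_zero_or_pos n with rfl | hn
    · simp [h0]
    · have hn' : (0 : ℝ) < n := by exact_mod_cast hn
      have h1 := hu.lim_le_div hb hn.ne'
      rw [le_div_iff₀ hn'] at h1
      rw [← Real.exp_nat_mul, ← Real.le_log_iff_exp_le (hpos n)]
      linarith
  · intro θ hθ hθ1
    have hlt : l < l - Real.log θ := by linarith [Real.log_neg hθ hθ1]
    obtain ⟨N, hN⟩ := eventually_atTop.1 (ht.eventually (gt_mem_nhds hlt))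
    have hr : 0 < Real.exp l / θ := div_pos (Real.exp_pos _) hθ
    have hev : ∀ k, max N 1 ≤ k → a k ≤ (Real.exp l / θ) ^ k := by
      intro k hk
      have hk' : (0 : ℝ) < k := by
        have : 0 < k := by omega
        exact_mod_cast this
      have h1 := hN k (by omega)
      rw [div_lt_iff₀ hk'] at h1
      have h2 : Real.exp l / θ = Real.exp (l - Real.log θ) := by
        rw [Real.exp_sub, Real.exp_log hθ]
      rw [h2, ← Real.exp_nat_mul, ← Real.log_le_iff_le_exp (hpos k)]
      linarith
    have hs : ∀ k, 0 ≤ a k / (Real.exp l / θ) ^ k := fun k => (div_pos (hpos k) (pow_pos hr k)).le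
    refine ⟨1 + ∑ k ∈ Finset.range (max N 1), a k / (Real.exp l / θ) ^ k, ?_, ?_⟩
    · have := Finset.sum_nonneg (s := Finset.range (max N 1)) fun k _ => hs k
      linarith
    · intro k
      have hnn := Finset.sum_nonneg (s := Finset.range (max N 1)) fun k _ => hs k
      rcases le_or_gt (max N 1) k with hk | hk
      · refine (hev k hk).trans ?_
        have := pow_pos hr k
        nlinarith
      · rw [← div_le_iff₀ (pow_pos hr k)]
        have := Finset.single_le_sum (f := fun k => a k / (Real.exp l / θ) ^ k)
          (fun k _ => hs k) (Finset.mem_range.2 hk)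
        linarith
  · intro s β hβ hj
    rcases Nat.eq_zero_or_pos s with rfl | hs
    · have := hj 1
      simpa [h0] using this
    · have hs' : (0 : ℝ) < s := by exact_mod_cast hs
      have h1 : Tendsto (fun j : ℕ => j * s) atTop atTop :=
        tendsto_id.atTop_mul_const' hs
      have h2 := ht.comp h1
      have h3 : Real.log β / s ≤ l := by
        refine ge_of_tendsto h2 ?_
        filter_upwards [eventually_gt_atTop 0] with j hj0
        have hj' : (0 : ℝ) < j := by exact_mod_cast hj0
        have h4 := Real.log_le_log (by positivity) (hj j)
        rw [Real.log_pow] at h4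
        simp only [Function.comp]
        push_cast
        rw [div_le_div_iff₀ hs' (by positivity)]
        nlinarith
      rw [div_le_iff₀ hs'] at h3
      rw [← Real.exp_nat_mul, ← Real.log_le_iff_le_exp hβ]
      linarith

lemma sum_aux (a : ℕ → ℝ) (hpos : ∀ n, 0 < a n) (q ρ H : ℝ) (hρ0 : 0 ≤ ρ)
    (hρ : ρ < 1) (hH : 0 ≤ H) (n : ℕ)
    (h : ∀ k < n, q ^ k * a k * a (n - 1 - k) ≤ ρ ^ k * (H * a n)) :
    ∑ k ∈ Finset.range n, q ^ k * a k * a (n - 1 - k) ≤ H / (1 - ρ) * a n := by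
  have h1 : ∑ k ∈ Finset.range n, q ^ k * a k * a (n - 1 - k) ≤
      ∑ k ∈ Finset.range n, ρ ^ k * (H * a n) :=
    Finset.sum_le_sum fun k hk => h k (Finset.mem_range.1 hk)
  rw [← Finset.sum_mul] at h1
  have h2 : ∑ k ∈ Finset.range n, ρ ^ k ≤ (1 - ρ)⁻¹ := by
    rw [← tsum_geometric_of_lt_one hρ0 hρ]
    exact (summable_geometric_of_lt_one hρ0 hρ).sum_le_tsum _ fun k _ => pow_nonneg hρ0 k
  have h3 := mul_le_mul_of_nonneg_right h2 (mul_nonneg hH (hpos n).le)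
  calc _ ≤ _ := h1
    _ ≤ _ := h3
    _ = _ := by ring

section core
variable {X : Type*} [MetricSpace X] [CompactSpace X] [MeasurableSpace X] [BorelSpace X]

lemma lip_bound [Nonempty X] {κ : X → Measure X} (hp : ∀ x, IsProbabilityMeasure (κ x))
    (hF : ∀ f : X → ℝ, Continuous f → Continuous fun x => ∫ y, f y ∂(κ x))
    {V : X → ℝ} (hV : Continuous V) {q K : ℝ} (hq0 : 0 ≤ q) (hK : 0 ≤ K)
    (hstep : ∀ (g D : X → ℝ) (M : ℝ), Continuous g → Continuous D → (∀ x, 0 ≤ D x) →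
      (∀ x, |g x| ≤ M) → (∀ x x', |g x - g x'| ≤ dist x x' * D x) → ∀ x x',
      |FK κ V g x - FK κ V g x'| ≤ dist x x' * (q * FK κ V D x + K * M))
    {f : X → ℝ} {Kf : ℝ≥0} (hf : LipschitzWith Kf f) {F : ℝ} (hf0 : ∀ x, 0 ≤ f x)
    (hfF : ∀ x, f x ≤ F) (a : ℕ → ℝ) (ha0 : ∀ n, 0 ≤ a n)
    (ha : ∀ n x, FKiter κ V n (fun _ => 1) x ≤ a n) (n : ℕ) :
    ∃ D : X → ℝ, Continuous D ∧ (∀ x, 0 ≤ D x) ∧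
      (∀ x x', |FKiter κ V n f x - FKiter κ V n f x'| ≤ dist x x' * D x) ∧
      ∀ m x, FKiter κ V m D x ≤ Kf * (q ^ n * a (m + n)) +
        K * F * ∑ k ∈ Finset.range n, q ^ k * a (k + m) * a (n - 1 - k) := by
  have hF0 : 0 ≤ F := by
    obtain ⟨x⟩ := (inferInstance : Nonempty X)
    exact (hf0 x).trans (hfF x)
  have hfc := hf.continuous
  induction n with
  | zero =>
    refine ⟨fun _ => Kf, continuous_const, fun _ => Kf.2, ?_, ?_⟩
    · intro x x'
      have := hf.dist_le_mul x x'
      rw [Real.dist_eq] at this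
      simp only [FKiter]
      linarith
    · intro m x
      rw [fkiter_const]
      simp only [Finset.range_zero, Finset.sum_empty, pow_zero, one_mul, add_zero, mul_zero]
      exact mul_le_mul_of_nonneg_left (ha m x) Kf.2
  | succ n ih =>
    obtain ⟨D, hDc, hD0, hD, hDm⟩ := ih
    have hgM : ∀ x, |FKiter κ V n f x| ≤ F * a n := by
      intro x
      rw [abs_of_nonneg (fkiter_nonneg V n hf0 x)]
      refine (fkiter_mono hp hF hV n hfc continuous_const hfF x).trans ?_
      rw [fkiter_const]
      exact mul_le_mul_of_nonneg_left (ha n x) hF0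
    have hc1 : Continuous (fun x => q * FKiter κ V 1 D x) :=
      continuous_const.mul (fkiter_cont hF hV 1 hDc)
    have hKn : 0 ≤ K * (F * a n) := mul_nonneg hK (mul_nonneg hF0 (ha0 n))
    refine ⟨fun x => q * FKiter κ V 1 D x + K * (F * a n), hc1.add continuous_const, ?_, ?_, ?_⟩
    · intro x
      exact add_nonneg (mul_nonneg hq0 (fkiter_nonneg V 1 hD0 x)) hKn
    · exact hstep _ D _ (fkiter_cont hF hV n hfc) hDc hD0 hgM hD
    · intro m x
      rw [fkiter_sum hp hF hV m hc1 continuous_const]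
      simp only
      rw [fkiter_const, fkiter_smul, ← fkiter_add, Finset.sum_range_succ']
      have h1 := mul_le_mul_of_nonneg_left (hDm (m + 1) x) hq0
      have h2 := mul_le_mul_of_nonneg_left (ha m x) hKn
      have e1 : ∑ k ∈ Finset.range n, q ^ (k + 1) * a (k + 1 + m) * a (n + 1 - 1 - (k + 1))
          = q * ∑ k ∈ Finset.range n, q ^ k * a (k + (m + 1)) * a (n - 1 - k) := by
        rw [Finset.mul_sum]
        refine Finset.sum_congr rfl fun k hk => ?_
        rw [show k + 1 + m = k + (m + 1) by ring, show n + 1 - 1 - (k + 1) = n - 1 - k by omega]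
        ring
      rw [e1]
      rw [show m + 1 + n = m + (n + 1) by ring] at h1
      simp only [pow_zero, zero_add, one_mul, Nat.sub_zero, Nat.add_sub_cancel]
      rw [pow_succ]
      refine (add_le_add h1 h2).trans (le_of_eq ?_)
      ring

end core

/-- Uniform Feller property of normalized Feynman–Kac averages: for
Lipschitz `V` and positive Lipschitz `f`, the family `{Q_n^V f / ‖Q_n^V f‖_∞}` is
uniformly equicontinuous. -/
theorem FK_uniform_feller
    {X : Type*} [MetricSpace X] [CompactSpace X] [MeasurableSpace X] [BorelSpace X]
    (κ : X → Measure X) (hκmeas : Measurable κ)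
    (hκprob : ∀ x, IsProbabilityMeasure (κ x))
    (hFeller : ∀ f : X → ℝ, Continuous f → Continuous fun x => ∫ y, f y ∂(κ x))
    -- hypothesis (I): uniform irreducibility
    (hI : ∀ ε : ℝ, 0 < ε → ∃ (N : ℕ) (p : ℝ≥0∞), 0 < p ∧
      ∀ x y : X, p < kIter κ N x (Metric.ball y ε))
    -- hypothesis (C): coupling
    {Ω₀ : Type*} [MeasurableSpace Ω₀] (P₀ : Measure Ω₀) [IsProbabilityMeasure P₀]
    (q : ℝ) (hq0 : 0 ≤ q) (hq1 : q < 1) (C : ℝ) (hC : 0 < C)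
    (R R' : X → X → Ω₀ → X)
    (hRmeas : Measurable fun p : (X × X) × Ω₀ => R p.1.1 p.1.2 p.2)
    (hR'meas : Measurable fun p : (X × X) × Ω₀ => R' p.1.1 p.1.2 p.2)
    (hRlaw : ∀ x x' : X, Measure.map (R x x') P₀ = κ x)
    (hR'law : ∀ x x' : X, Measure.map (R' x x') P₀ = κ x')
    (hcouple : ∀ x x' : X,
      P₀ {ω | q * dist x x' < dist (R x x' ω) (R' x x' ω)} ≤ ENNReal.ofReal (C * dist x x'))
    (V : X → ℝ) (KV : ℝ≥0) (hV : LipschitzWith KV V)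
    (f : X → ℝ) (Kf : ℝ≥0) (hf : LipschitzWith Kf f) (hfpos : ∀ x, 0 < f x) :
    ∀ ε : ℝ, 0 < ε → ∃ δ : ℝ, 0 < δ ∧ ∀ (n : ℕ) (x x' : X), dist x x' < δ →
      |FKiter κ V n f x - FKiter κ V n f x'| < ε * supNorm (FKiter κ V n f) := by
  intro ε hε
  rcases isEmpty_or_nonempty X with hX | hX
  · exact ⟨1, one_pos, fun n x => hX.elim x⟩
  have hVc := hV.continuous
  have hfc := hf.continuous
  set B := supNorm V with hBdef
  have hB : ∀ x, |V x| ≤ B := abs_le_supNorm hVc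
  have hstep := fun (g D : X → ℝ) (M : ℝ) (hg : Continuous g) (hD : Continuous D)
      (hD0 : ∀ x, 0 ≤ D x) (hM : ∀ x, |g x| ≤ M)
      (hgD : ∀ x x', |g x - g x'| ≤ dist x x' * D x) =>
    one_step hκprob P₀ q hq0 C hC R R' hRmeas hR'meas hRlaw hR'law hcouple V KV hV hB
      hg hD hD0 hM hgD
  set K := Real.exp B * (KV * q + 2 * C) with hKdef
  have hK : 0 ≤ K := by positivity
  have hone : Continuous (fun _ : X => (1 : ℝ)) := continuous_const
  have hQc : ∀ n, Continuous (FKiter κ V n (fun _ => 1)) := fun n => fkiter_cont hFeller hVc n hone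
  have hQ0 : ∀ n x, 0 ≤ FKiter κ V n (fun _ => 1) x := fun n =>
    fkiter_nonneg V n (fun _ => zero_le_one)
  obtain ⟨a, hadef⟩ : ∃ a : ℕ → ℝ, a = fun n => supNorm (FKiter κ V n (fun _ => 1)) := ⟨_, rfl⟩
  have ha : ∀ n x, FKiter κ V n (fun _ => 1) x ≤ a n := fun n x => by
    rw [hadef]; exact (le_abs_self _).trans (abs_le_supNorm (hQc n) x)
  have hale : ∀ n c, (∀ x, FKiter κ V n (fun _ => 1) x ≤ c) → a n ≤ c := fun n c h => by
    rw [hadef]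
    refine supNorm_le_of fun x => ?_
    rw [abs_of_nonneg (hQ0 n x)]; exact h x
  -- lower bound propagation
  have hprop : ∀ (s : ℕ) (β : ℝ), 0 < β → (∀ x, β ≤ FKiter κ V s (fun _ => 1) x) →
      ∀ j x, β ^ j ≤ FKiter κ V (j * s) (fun _ => 1) x := by
    intro s β hβ h j
    induction j with
    | zero => intro x; simp [FKiter]
    | succ j ih =>
      intro x
      rw [Nat.succ_mul, fkiter_add]
      have h1 := fkiter_mono hκprob hFeller hVc (j * s) (continuous_const (y := β)) (hQc s) h x
      rw [fkiter_const] at h1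
      refine le_trans ?_ h1
      rw [pow_succ']
      exact mul_le_mul_of_nonneg_left (ih x) hβ.le
  obtain ⟨x₀⟩ := id hX
  have hlow : ∀ n, Real.exp (-B) ^ n ≤ a n := by
    intro n
    have h := hprop 1 (Real.exp (-B)) (Real.exp_pos _) (by
      intro x
      have := hκprob x
      simp only [FKiter, FK, mul_one]
      have h1 : ∫ _y, Real.exp (-B) ∂(κ x) ≤ ∫ y, Real.exp (V y) ∂(κ x) := by
        refine integral_mono (integrable_const _)
          (cont_integrable (Real.continuous_exp.comp hVc) _) ?_
        intro z
        exact Real.exp_le_exp.2 (by linarith [neg_abs_le (V z), hB z])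
      simpa using h1) n x₀
    rw [mul_one] at h
    exact h.trans (ha n x₀)
  have hpos : ∀ n, 0 < a n := fun n => lt_of_lt_of_le (by positivity) (hlow n)
  have h0 : a 0 = 1 := by
    refine le_antisymm (hale 0 1 fun x => le_refl _) ?_
    simpa using hlow 0
  have hsub : ∀ m n, a (m + n) ≤ a m * a n := by
    intro m n
    refine hale _ _ fun x => ?_
    rw [fkiter_add]
    have h1 := fkiter_mono hκprob hFeller hVc m (hQc n) (continuous_const (y := a n)) (ha n) x
    rw [fkiter_const] at h1
    have := mul_le_mul_of_nonneg_left (ha m x) (hpos n).le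
    linarith
  obtain ⟨r, hr, hr1, hr2, hr3⟩ := growth_aux a hpos h0 hsub B hlow
  -- Lipschitz bounds
  have hlip : ∀ (g : X → ℝ) (Kg : ℝ≥0) (F : ℝ), LipschitzWith Kg g → (∀ x, 0 ≤ g x) →
      (∀ x, g x ≤ F) → ∀ n x x', |FKiter κ V n g x - FKiter κ V n g x'| ≤
        dist x x' * (Kg * (q ^ n * a n) +
          K * F * ∑ k ∈ Finset.range n, q ^ k * a k * a (n - 1 - k)) := by
    intro g Kg F hg hg0 hgF n x x'
    obtain ⟨D, -, -, hD, hDm⟩ := lip_bound hκprob hFeller hVc hq0 hK hstep hg hg0 hgF a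
      (fun n => (hpos n).le) ha n
    refine (hD x x').trans (mul_le_mul_of_nonneg_left ?_ dist_nonneg)
    have := hDm 0 x
    simpa [FKiter] using this
  -- choose θ
  obtain ⟨θ, hθq, hθ1⟩ := exists_between hq1
  have hθ0 : 0 < θ := lt_of_le_of_lt hq0 hθq
  obtain ⟨A, hA, hA1⟩ := hr2 θ hθ0 hθ1
  have hρ0 : 0 ≤ q / θ := div_nonneg hq0 hθ0.le
  have hρ1 : q / θ < 1 := (div_lt_one hθ0).2 hθq
  set H := K * (A / r / (1 - q / θ)) + 1 with hHdef
  have hH : 0 < H := by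
    have : 0 < 1 - q / θ := by linarith
    positivity
  have hrec : ∀ n, (∀ j ≤ n, a j / r ^ j ≤ a n / r ^ n) → ∀ x x',
      |FKiter κ V n (fun _ => 1) x - FKiter κ V n (fun _ => 1) x'| ≤ dist x x' * (H * a n) := by
    intro n hn x x'
    refine (hlip (fun _ => 1) 0 1 (LipschitzWith.const 1) (fun _ => zero_le_one)
      (fun _ => le_rfl) n x x').trans (mul_le_mul_of_nonneg_left ?_ dist_nonneg)
    have hs := sum_aux a hpos q (q / θ) (A / r) hρ0 hρ1 (by positivity) n (by
      intro k hk
      have h1 := hn (n - 1 - k) (by omega)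
      have h2 : a (n - 1 - k) ≤ a n / r ^ (k + 1) := by
        rw [div_le_div_iff₀ (by positivity) (by positivity)] at h1
        rw [le_div_iff₀ (by positivity)]
        have e : r ^ n = r ^ (k + 1) * r ^ (n - 1 - k) := by
          rw [← pow_add]; congr 1; omega
        rw [e, ← mul_assoc] at h1
        exact le_of_mul_le_mul_right h1 (by positivity)
      calc q ^ k * a k * a (n - 1 - k) ≤ q ^ k * (A * (r / θ) ^ k) * (a n / r ^ (k + 1)) := by
            refine mul_le_mul (mul_le_mul_of_nonneg_left (hA1 k) (by positivity)) h2 (hpos _).le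
              (by positivity)
        _ = (q / θ) ^ k * (A / r * a n) := by
            rw [div_pow, div_pow, pow_succ]
            field_simp)
    have hs' := mul_le_mul_of_nonneg_left hs hK
    have := hpos n
    simp only [NNReal.coe_zero, zero_mul, zero_add, mul_one]
    rw [hHdef]
    nlinarith
  obtain ⟨N, p, hp0, hNp⟩ := hI (1 / (2 * H)) (by positivity)
  have hpt : p ≠ ⊤ := ne_top_of_lt (hNp x₀ x₀)
  have hp' : 0 < p.toReal := ENNReal.toReal_pos hp0.ne' hpt
  set c := Real.exp (-B) ^ N * (p.toReal / 2) with hcdef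
  have hc : 0 < c := by positivity
  have hlowrec : ∀ n, (∀ j ≤ n, a j / r ^ j ≤ a n / r ^ n) → ∀ x,
      c * a n ≤ FKiter κ V (N + n) (fun _ => 1) x := by
    intro n hn x
    obtain ⟨y, -, hy⟩ := isCompact_univ.exists_isMaxOn Set.univ_nonempty (hQc n).continuousOn
    have hyn : a n ≤ FKiter κ V n (fun _ => 1) y := hale n _ fun z => hy (Set.mem_univ z)
    have hball : ∀ z ∈ Metric.ball y (1 / (2 * H)), a n / 2 ≤ FKiter κ V n (fun _ => 1) z := by
      intro z hz
      have h1 := hrec n hn y z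
      rw [Metric.mem_ball, dist_comm] at hz
      have h2 : dist y z * (H * a n) ≤ 1 / (2 * H) * (H * a n) :=
        mul_le_mul_of_nonneg_right hz.le (mul_pos hH (hpos n)).le
      have h3 : 1 / (2 * H) * (H * a n) = a n / 2 := by field_simp
      linarith [le_abs_self (FKiter κ V n (fun _ => 1) y - FKiter κ V n (fun _ => 1) z)]
    have h1 := fkiter_ge_kIter hκmeas hκprob hFeller hVc hB N (hQc n) (hQ0 n) x
    rw [← fkiter_add] at h1
    have h2 : ENNReal.ofReal (a n / 2) * p ≤
        ∫⁻ z, ENNReal.ofReal (FKiter κ V n (fun _ => 1) z) ∂(kIter κ N x) := by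
      calc ENNReal.ofReal (a n / 2) * p
          ≤ ENNReal.ofReal (a n / 2) * kIter κ N x (Metric.ball y (1 / (2 * H))) :=
            mul_le_mul_right (hNp x y).le _
        _ = ∫⁻ _z in Metric.ball y (1 / (2 * H)), ENNReal.ofReal (a n / 2) ∂(kIter κ N x) := by
            rw [setLIntegral_const]
        _ ≤ ∫⁻ z in Metric.ball y (1 / (2 * H)),
              ENNReal.ofReal (FKiter κ V n (fun _ => 1) z) ∂(kIter κ N x) :=
            setLIntegral_mono' Metric.isOpen_ball.measurableSet
              fun z hz => ENNReal.ofReal_le_ofReal (hball z hz)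
        _ ≤ _ := setLIntegral_le_lintegral _ _
    have h3 := (mul_le_mul_right h2 (ENNReal.ofReal (Real.exp (-B) ^ N))).trans h1
    rw [← ENNReal.ofReal_toReal hpt, ← ENNReal.ofReal_mul (by linarith [hpos n]),
      ← ENNReal.ofReal_mul (by positivity), ENNReal.ofReal_le_ofReal_iff (hQ0 _ x)] at h3
    rw [hcdef]
    linarith
  have hrecbd : ∀ n, (∀ j ≤ n, a j / r ^ j ≤ a n / r ^ n) → a n / r ^ n ≤ r ^ N / c := by
    intro n hn
    have h1 := hlowrec n hn
    have hβ : 0 < c * a n := mul_pos hc (hpos n)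
    have h2 := hr3 (N + n) (c * a n) hβ fun j => (hprop _ _ hβ h1 j x₀).trans (ha _ x₀)
    rw [div_le_div_iff₀ (by positivity) hc]
    rw [pow_add] at h2
    linarith
  set b := r ^ N / c with hbdef
  have hb : 0 < b := by positivity
  have hbd : ∀ m, a m ≤ b * r ^ m := by
    intro m
    obtain ⟨n, hn, hmax⟩ := Finset.exists_max_image (Finset.range (m + 1)) (fun j => a j / r ^ j)
      ⟨0, by simp⟩
    have h1 := hrecbd n (by
      intro j hj
      refine hmax j ?_
      rw [Finset.mem_range] at hn ⊢
      omega)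
    have h2 := hmax m (by simp)
    rw [← div_le_iff₀ (by positivity)]
    exact h2.trans h1
  -- final bound
  set F := supNorm f with hFdef
  have hfF : ∀ x, f x ≤ F := fun x => (le_abs_self _).trans (abs_le_supNorm hfc x)
  have hF0 : 0 < F := lt_of_lt_of_le (hfpos x₀) (hfF x₀)
  obtain ⟨y, -, hy⟩ := isCompact_univ.exists_isMinOn Set.univ_nonempty hfc.continuousOn
  have hfy : ∀ x, f y ≤ f x := fun x => hy (Set.mem_univ x)
  have hMn : ∀ n, f y * a n ≤ supNorm (FKiter κ V n f) := by
    intro n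
    have h1 : a n ≤ supNorm (FKiter κ V n f) / f y := by
      refine hale _ _ fun x => ?_
      rw [le_div_iff₀ (hfpos y)]
      have h2 := fkiter_mono hκprob hFeller hVc n (continuous_const (y := f y)) hfc hfy x
      rw [fkiter_const] at h2
      have h3 := (le_abs_self _).trans (abs_le_supNorm (fkiter_cont hFeller hVc n hfc) x)
      linarith
    rw [le_div_iff₀ (hfpos y)] at h1
    linarith
  set T := (Kf + K * F * (b ^ 2 / r / (1 - q))) with hTdef
  have hq1' : 0 < 1 - q := by linarith
  have hT : 0 ≤ T := by positivity
  have hfin : ∀ n x x', |FKiter κ V n f x - FKiter κ V n f x'| ≤ dist x x' * (T * a n) := by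
    intro n x x'
    refine (hlip f Kf F hf (fun x => (hfpos x).le) hfF n x x').trans
      (mul_le_mul_of_nonneg_left ?_ dist_nonneg)
    have hs := sum_aux a hpos q q (b ^ 2 / r) hq0 hq1 (by positivity) n (by
      intro k hk
      have e : r ^ n = r ^ k * r ^ (n - 1 - k) * r := by
        rw [← pow_add, ← pow_succ]; congr 1; omega
      calc q ^ k * a k * a (n - 1 - k) ≤ q ^ k * (b * r ^ k) * (b * r ^ (n - 1 - k)) := by
            refine mul_le_mul (mul_le_mul_of_nonneg_left (hbd k) (by positivity)) (hbd _)
              (hpos _).le (by positivity)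
        _ = q ^ k * (b ^ 2 / r * r ^ n) := by
            rw [e]; field_simp
        _ ≤ q ^ k * (b ^ 2 / r * a n) := by
            have := hr1 n
            gcongr)
    have hs' := mul_le_mul_of_nonneg_left hs (mul_nonneg hK hF0.le)
    have h1 : (Kf : ℝ) * (q ^ n * a n) ≤ Kf * a n := by
      refine mul_le_mul_of_nonneg_left ?_ Kf.2
      exact mul_le_of_le_one_left (hpos n).le (pow_le_one₀ hq0 hq1.le)
    rw [hTdef]
    linarith
  refine ⟨ε * f y / (T + 1), by have := hfpos y; positivity, ?_⟩
  intro n x x' hd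
  rw [lt_div_iff₀ (by positivity)] at hd
  have h1 := hfin n x x'
  have h2 := mul_le_mul_of_nonneg_left (hMn n) hε.le
  have h3 : dist x x' * T < ε * f y := by
    have := dist_nonneg (x := x) (y := x')
    linarith
  have h4 := mul_lt_mul_of_pos_right h3 (hpos n)
  linarith
end
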